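/- arXiv:1601.03678 — 6 statements merged into one kernel-verified Lean document; each statement's English description precedes it below -/
import Mathlib

section
/- Let v be a random vector uniformly distributed on the unit sphere S^{n-1} of R^n. Then for any real constant C > 1, with probability at least 1 - 2 n^{1-C} - exp(-((C-1)^2/(4C^2)) n), the largest coordinate in absolute value satisfies ||v||_inf <= sqrt(2 C^3 (log n) / n). -/
open MeasureTheory

/-- A measure `μ` on `ℝⁿ` is the uniform (rotation-invariant) probability distribution on the
unit sphere `S^{n-1}`: it is a probability measure, it gives full mass to the unit sphere, and
it is invariant under every linear isometry of `ℝⁿ`. -/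
def IsUniformOnSphere {n : ℕ} (μ : Measure (EuclideanSpace ℝ (Fin n))) : Prop :=
  IsProbabilityMeasure μ ∧
  μ (Metric.sphere (0 : EuclideanSpace ℝ (Fin n)) 1) = 1 ∧
  ∀ O : EuclideanSpace ℝ (Fin n) ≃ₗᵢ[ℝ] EuclideanSpace ℝ (Fin n),
    Measure.map O μ = μ

/-!
Compare the random vector `x` with an independent standard Gaussian `y` in dimension `d`. By
rotation invariance the moment generating function of `⟪y, x⟫`, for fixed `y`, is
`M (s * ‖y‖)`, where `M` is that of a single coordinate of `x`. Integrating over `y` first gives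
`E M (s * ‖y‖) ≤ exp (s ^ 2 / 2)`. Since `x` is symmetric, `M √w` is an average of the functions
`cosh (√w * r)`, whose power series in `w` have nonnegative coefficients. So `w ↦ M √w` is convex,
and Jensen's inequality with `E ‖y‖ ^ 2 = d` yields `M (s * √d) ≤ exp (s ^ 2 / 2)`: each
coordinate of `x` is sub-Gaussian with variance proxy `1 / d`. A union bound over the coordinates
finishes the proof. As the norm of `y` enters only through its second moment, no deviation
estimate for it is needed.
-/

open ProbabilityTheory Module
open scoped NNReal RealInnerProductSpace

section RealMGF

variable {Ω ι : Type*} {mΩ : MeasurableSpace Ω} {μ : Measure Ω} {X : Ω → ℝ} {c : ℝ≥0} {ε : ℝ}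

lemma convexOn_cosh_sqrt_mul (r : ℝ) :
    ConvexOn ℝ (Set.Ici 0) fun w ↦ Real.cosh (√w * r) := by
  have hasSum_cosh {w : ℝ} (hw : 0 ≤ w) :
      HasSum (fun k : ℕ ↦ r ^ (2 * k) / (2 * k).factorial * w ^ k) (Real.cosh (√w * r)) := by
    convert Real.hasSum_cosh (√w * r) using 2 with k
    rw [mul_pow, pow_mul √w, Real.sq_sqrt hw]
    ring
  refine ⟨convex_Ici 0, fun v hv w hw a b ha hb hab ↦ ?_⟩
  refine hasSum_le (fun k ↦ ?_) (hasSum_cosh (convex_Ici 0 hv hw ha hb hab))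
    (((hasSum_cosh hv).const_smul a).add ((hasSum_cosh hw).const_smul b))
  have hcoeff : 0 ≤ r ^ (2 * k) / (2 * k).factorial :=
    div_nonneg ((even_two_mul k).pow_nonneg r) (Nat.cast_nonneg _)
  exact ((convexOn_pow k).smul hcoeff).2 hv hw ha hb hab

lemma mgf_eq_integral_cosh_of_even (hX : ∀ t, Integrable (fun ω ↦ Real.exp (t * X ω)) μ)
    (heven : (mgf X μ).Even) (t : ℝ) :
    mgf X μ t = ∫ ω, Real.cosh (t * X ω) ∂μ := by
  calc mgf X μ t = (mgf X μ t + mgf X μ (-t)) / 2 := by rw [heven t]; ring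
    _ = ∫ ω, (Real.exp (t * X ω) + Real.exp (-t * X ω)) / 2 ∂μ := by
      rw [integral_div, integral_add (hX t) (hX (-t)), mgf, mgf]
    _ = ∫ ω, Real.cosh (t * X ω) ∂μ := by simp only [Real.cosh_eq, neg_mul]

lemma convexOn_mgf_sqrt_of_even (hX : ∀ t, Integrable (fun ω ↦ Real.exp (t * X ω)) μ)
    (heven : (mgf X μ).Even) :
    ConvexOn ℝ (Set.Ici 0) fun w ↦ mgf X μ √w := by
  simp only [mgf_eq_integral_cosh_of_even hX heven]
  refine integral_convexOn_of_integrand_ae (convex_Ici 0)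
    (.of_forall fun ω ↦ convexOn_cosh_sqrt_mul (X ω)) fun w _ ↦ ?_
  simpa only [Real.cosh_eq, neg_mul, Pi.add_apply] using ((hX √w).add (hX (-√w))).div_const 2

lemma measureReal_lt_abs_le_of_hasSubgaussianMGF [IsFiniteMeasure μ]
    (hX : HasSubgaussianMGF X c μ) (hε : 0 ≤ ε) :
    μ.real {ω | ε < |X ω|} ≤ 2 * Real.exp (-ε ^ 2 / (2 * c)) := by
  have hsub : {ω | ε < |X ω|} ⊆ {ω | ε ≤ X ω} ∪ {ω | ε ≤ (-X) ω} :=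
    fun ω (hω : ε < |X ω|) ↦ (lt_abs.1 hω).imp (fun h ↦ h.le) fun h ↦ h.le
  calc μ.real {ω | ε < |X ω|}
      ≤ μ.real {ω | ε ≤ X ω} + μ.real {ω | ε ≤ (-X) ω} :=
        (measureReal_mono hsub).trans (measureReal_union_le _ _)
    _ ≤ 2 * Real.exp (-ε ^ 2 / (2 * c)) := by
      linarith [hX.measure_ge_le hε, hX.neg.measure_ge_le hε]

lemma one_sub_le_measureReal_forall_abs_le_of_hasSubgaussianMGF [Fintype ι]
    [IsProbabilityMeasure μ] {X : ι → Ω → ℝ} (hX : ∀ i, HasSubgaussianMGF (X i) c μ)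
    (hε : 0 ≤ ε) :
    1 - 2 * (Fintype.card ι * Real.exp (-ε ^ 2 / (2 * c))) ≤
      μ.real {ω | ∀ i, |X i ω| ≤ ε} := by
  have hcompl : {ω | ∀ i, |X i ω| ≤ ε}ᶜ = ⋃ i, {ω | ε < |X i ω|} := by
    ext ω
    simp only [Set.mem_compl_iff, Set.mem_ofPred_eq, not_forall, not_le, Set.mem_iUnion]
  have hbad : μ.real {ω | ∀ i, |X i ω| ≤ ε}ᶜ ≤
      Fintype.card ι * (2 * Real.exp (-ε ^ 2 / (2 * c))) := by
    rw [hcompl, ← nsmul_eq_mul]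
    exact (measureReal_iUnion_fintype_le _).trans
      (Finset.sum_le_card_nsmul _ _ _ fun i _ ↦
        measureReal_lt_abs_le_of_hasSubgaussianMGF (hX i) hε)
  have hcover := measureReal_union_le (μ := μ) {ω | ∀ i, |X i ω| ≤ ε} {ω | ∀ i, |X i ω| ≤ ε}ᶜ
  rw [Set.union_compl_self, probReal_univ] at hcover
  linarith

end RealMGF

section InnerProductSpace

variable {E : Type*} [NormedAddCommGroup E] [InnerProductSpace ℝ E] [MeasurableSpace E]

/-- Rotation invariance of a measure on an inner product space. All linear isometries count as
rotations, the orientation-reversing ones included, so that reflections may be used to move one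
vector to another. -/
def IsRotationInvariant (μ : Measure E) : Prop :=
  ∀ O : E ≃ₗᵢ[ℝ] E, μ.map O = μ

variable [BorelSpace E]

namespace IsRotationInvariant

variable {μ : Measure E} {u v : E}

lemma identDistrib_inner (hμ : IsRotationInvariant μ) (huv : ‖u‖ = ‖v‖) :
    IdentDistrib (fun x ↦ ⟪u, x⟫) (fun x ↦ ⟪v, x⟫) μ μ where
  aemeasurable_fst := by fun_prop
  aemeasurable_snd := by fun_prop
  map_eq := by
    let O := (Submodule.span ℝ {u - v})ᗮ.reflection
    have hO : O u = v := Submodule.reflection_sub huv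
    conv_rhs => rw [← hμ O, Measure.map_map (by fun_prop) (by fun_prop)]
    congr with x
    rw [Function.comp_apply, ← hO, O.inner_map_map]

lemma mgf_inner_even (hμ : IsRotationInvariant μ) (u : E) :
    (mgf (fun x ↦ ⟪u, x⟫) μ).Even := fun t ↦ by
  rw [← mgf_neg, mgf_congr_identDistrib (hμ.identDistrib_inner (norm_neg u).symm)]
  simp only [inner_neg_left]
  rfl

lemma mgf_inner_mul_norm (hμ : IsRotationInvariant μ) (hu : ‖u‖ = 1) (v : E) (t : ℝ) :
    mgf (fun x ↦ ⟪u, x⟫) μ (t * ‖v‖) = mgf (fun x ↦ ⟪v, x⟫) μ t := by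
  have hnorm : ‖v‖ = ‖‖v‖ • u‖ := by simp [norm_smul, hu]
  rw [mgf_congr_identDistrib (hμ.identDistrib_inner hnorm), mul_comm, ← mgf_const_mul]
  simp only [real_inner_smul_left]

end IsRotationInvariant

lemma integrable_exp_mul_inner_of_ae_norm_le_one {μ : Measure E} [IsFiniteMeasure μ]
    (hball : ∀ᵐ x ∂μ, ‖x‖ ≤ 1) (u : E) (t : ℝ) :
    Integrable (fun x ↦ Real.exp (t * ⟪u, x⟫)) μ := by
  refine integrable_exp_mul_of_mem_Icc (a := -‖u‖) (b := ‖u‖) (by fun_prop) ?_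
  filter_upwards [hball] with x hx
  exact abs_le.1 ((abs_real_inner_le_norm u x).trans (mul_le_of_le_one_right (norm_nonneg u) hx))

variable [FiniteDimensional ℝ E]

lemma map_inner_stdGaussian (x : E) :
    (stdGaussian E).map (fun y ↦ ⟪x, y⟫) = gaussianReal 0 (‖x‖₊ ^ 2) := by
  have h := IsGaussian.map_eq_gaussianReal (μ := stdGaussian E) (innerSL ℝ x)
  rw [variance_dual_stdGaussian, integral_strongDual_stdGaussian, innerSL_apply_norm] at h
  rwa [Real.toNNReal_pow (norm_nonneg x), norm_toNNReal] at h

lemma mgf_inner_stdGaussian (x : E) (t : ℝ) :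
    mgf (fun y ↦ ⟪x, y⟫) (stdGaussian E) t = Real.exp (‖x‖ ^ 2 * t ^ 2 / 2) := by
  simp [mgf_gaussianReal (map_inner_stdGaussian x)]

lemma integrable_exp_mul_inner_stdGaussian (x : E) (t : ℝ) :
    Integrable (fun y ↦ Real.exp (t * ⟪x, y⟫)) (stdGaussian E) :=
  mgf_pos_iff.1 (by rw [mgf_inner_stdGaussian]; positivity)

lemma mgf_inner_stdGaussian_le {x : E} (hx : ‖x‖ ≤ 1) (t : ℝ) :
    mgf (fun y ↦ ⟪x, y⟫) (stdGaussian E) t ≤ Real.exp (t ^ 2 / 2) := by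
  rw [mgf_inner_stdGaussian]
  gcongr
  exact mul_le_of_le_one_left (sq_nonneg t) (pow_le_one₀ (norm_nonneg x) hx)

lemma integrable_norm_sq_stdGaussian :
    Integrable (fun y ↦ ‖y‖ ^ 2) (stdGaussian E) :=
  (IsGaussian.memLp_two_id (μ := stdGaussian E)).norm.integrable_sq

lemma integral_inner_sq_stdGaussian (x : E) :
    ∫ y, ⟪x, y⟫ ^ 2 ∂(stdGaussian E) = ‖x‖ ^ 2 := by
  have hvar := variance_dual_stdGaussian (innerSL ℝ x)
  rw [variance_of_integral_eq_zero (by fun_prop) (integral_strongDual_stdGaussian _)] at hvar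
  simpa using hvar

lemma integral_norm_sq_stdGaussian :
    ∫ y, ‖y‖ ^ 2 ∂(stdGaussian E) = finrank ℝ E := by
  let b := stdOrthonormalBasis ℝ E
  have hint (i) : Integrable (fun y ↦ ⟪b i, y⟫ ^ 2) (stdGaussian E) :=
    (IsGaussian.memLp_dual (stdGaussian E) (innerSL ℝ (b i)) 2 (by simp)).integrable_sq
  simp_rw [← b.sum_sq_inner_right]
  rw [integral_finsetSum _ fun i _ ↦ hint i]
  simp [integral_inner_sq_stdGaussian]

variable {μ : Measure E}

lemma integrable_exp_mul_inner_prod_stdGaussian [IsFiniteMeasure μ]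
    (hball : ∀ᵐ x ∂μ, ‖x‖ ≤ 1) (t : ℝ) :
    Integrable (fun p : E × E ↦ Real.exp (t * ⟪p.1, p.2⟫)) (μ.prod (stdGaussian E)) := by
  refine (integrable_prod_iff (by fun_prop)).2
    ⟨.of_forall fun x ↦ integrable_exp_mul_inner_stdGaussian x t, ?_⟩
  have hnorm : (fun x ↦ ∫ y, ‖Real.exp (t * ⟪x, y⟫)‖ ∂(stdGaussian E)) =
      fun x ↦ Real.exp (‖x‖ ^ 2 * t ^ 2 / 2) := by
    simp only [Real.norm_eq_abs, Real.abs_exp, ← mgf_inner_stdGaussian, mgf]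
  rw [hnorm]
  refine .of_bound (by fun_prop) (Real.exp (t ^ 2 / 2)) ?_
  filter_upwards [hball] with x hx
  rw [Real.norm_eq_abs, Real.abs_exp, ← mgf_inner_stdGaussian]
  exact mgf_inner_stdGaussian_le hx t

lemma integrable_mgf_inner_stdGaussian [IsFiniteMeasure μ]
    (hball : ∀ᵐ x ∂μ, ‖x‖ ≤ 1) (t : ℝ) :
    Integrable (fun y ↦ mgf (fun x ↦ ⟪y, x⟫) μ t) (stdGaussian E) := by
  simpa only [mgf, real_inner_comm] using
    (integrable_exp_mul_inner_prod_stdGaussian hball t).integral_prod_right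

lemma integral_mgf_inner_stdGaussian_le [IsProbabilityMeasure μ]
    (hball : ∀ᵐ x ∂μ, ‖x‖ ≤ 1) (t : ℝ) :
    ∫ y, mgf (fun x ↦ ⟪y, x⟫) μ t ∂(stdGaussian E) ≤ Real.exp (t ^ 2 / 2) := by
  have hint := integrable_exp_mul_inner_prod_stdGaussian hball t
  calc ∫ y, mgf (fun x ↦ ⟪y, x⟫) μ t ∂(stdGaussian E)
      = ∫ x, mgf (fun y ↦ ⟪x, y⟫) (stdGaussian E) t ∂μ := by
        simpa only [mgf, real_inner_comm] using
          (integral_integral_swap (f := fun x y ↦ Real.exp (t * ⟪x, y⟫)) hint).symm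
    _ ≤ ∫ _, Real.exp (t ^ 2 / 2) ∂μ := by
        refine integral_mono_ae hint.integral_prod_left (integrable_const _) ?_
        filter_upwards [hball] with x hx using mgf_inner_stdGaussian_le hx t
    _ = Real.exp (t ^ 2 / 2) := by simp

lemma IsRotationInvariant.mgf_inner_le [IsProbabilityMeasure μ] (hμ : IsRotationInvariant μ)
    (hball : ∀ᵐ x ∂μ, ‖x‖ ≤ 1) {u : E} (hu : ‖u‖ = 1) {s : ℝ} (hs : 0 ≤ s) :
    mgf (fun x ↦ ⟪u, x⟫) μ (s * √(finrank ℝ E)) ≤ Real.exp (s ^ 2 / 2) := by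
  have hexp := integrable_exp_mul_inner_of_ae_norm_le_one hball u
  have hsqrt (y : E) : √(s ^ 2 * ‖y‖ ^ 2) = s * ‖y‖ := by
    rw [← mul_pow, Real.sqrt_sq (by positivity)]
  have hrot (y : E) : mgf (fun x ↦ ⟪u, x⟫) μ √(s ^ 2 * ‖y‖ ^ 2) = mgf (fun x ↦ ⟪y, x⟫) μ s := by
    rw [hsqrt, hμ.mgf_inner_mul_norm hu]
  have jensen := (convexOn_mgf_sqrt_of_even hexp (hμ.mgf_inner_even u)).map_integral_le
    (μ := stdGaussian E) (f := fun y ↦ s ^ 2 * ‖y‖ ^ 2)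
    ((continuous_mgf hexp).comp Real.continuous_sqrt).continuousOn isClosed_Ici
    (.of_forall fun y ↦ Set.mem_Ici.2 (by positivity)) (integrable_norm_sq_stdGaussian.const_mul _)
    (by simpa only [Function.comp_def, hrot] using integrable_mgf_inner_stdGaussian hball s)
  calc mgf (fun x ↦ ⟪u, x⟫) μ (s * √(finrank ℝ E))
      = mgf (fun x ↦ ⟪u, x⟫) μ √(∫ y, s ^ 2 * ‖y‖ ^ 2 ∂(stdGaussian E)) := by
        rw [integral_const_mul, integral_norm_sq_stdGaussian, Real.sqrt_mul (sq_nonneg s),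
          Real.sqrt_sq hs]
    _ ≤ ∫ y, mgf (fun x ↦ ⟪y, x⟫) μ s ∂(stdGaussian E) := by simpa only [hrot] using jensen
    _ ≤ Real.exp (s ^ 2 / 2) := integral_mgf_inner_stdGaussian_le hball s

lemma IsRotationInvariant.hasSubgaussianMGF_inner [IsProbabilityMeasure μ]
    (hμ : IsRotationInvariant μ) (hball : ∀ᵐ x ∂μ, ‖x‖ ≤ 1) {u : E} (hu : ‖u‖ = 1) :
    HasSubgaussianMGF (fun x ↦ ⟪u, x⟫) (finrank ℝ E : ℝ≥0)⁻¹ μ where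
  integrable_exp_mul := integrable_exp_mul_inner_of_ae_norm_le_one hball u
  mgf_le t := by
    have hdim : (0 : ℝ) < finrank ℝ E := by
      have : Nontrivial E := ⟨u, 0, norm_ne_zero_iff.1 (by simp [hu])⟩
      exact_mod_cast finrank_pos
    have habs : mgf (fun x ↦ ⟪u, x⟫) μ |t| = mgf (fun x ↦ ⟪u, x⟫) μ t := by
      rcases abs_choice t with h | h <;> rw [h]
      exact hμ.mgf_inner_even u t
    have h := hμ.mgf_inner_le hball hu (s := |t| / √(finrank ℝ E)) (by positivity)
    rw [div_mul_cancel₀ _ (by positivity), habs, div_pow, sq_abs, Real.sq_sqrt hdim.le] at h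
    simpa only [NNReal.coe_inv, NNReal.coe_natCast, inv_mul_eq_div] using h

end InnerProductSpace

lemma natCast_rpow_le_natCast_rpow (n : ℕ) {p q : ℝ} (hp : p ≠ 0) (hpq : p ≤ q) :
    (n : ℝ) ^ p ≤ (n : ℝ) ^ q := by
  rcases n.eq_zero_or_pos with rfl | hn
  · rw [Nat.cast_zero, Real.zero_rpow hp]
    positivity
  · exact Real.rpow_le_rpow_of_exponent_le (Nat.one_le_cast.2 hn) hpq

lemma natCast_mul_exp_neg_mul_log_le_rpow (n : ℕ) (a : ℝ) :
    n * Real.exp (-(a * Real.log n)) ≤ (n : ℝ) ^ (1 - a) := by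
  rcases n.eq_zero_or_pos with rfl | hn
  · rw [Nat.cast_zero, zero_mul]
    positivity
  · have hn : (0 : ℝ) < n := Nat.cast_pos.2 hn
    rw [Real.rpow_sub hn, Real.rpow_one, Real.rpow_def_of_pos hn, Real.exp_neg, mul_comm a,
      div_eq_mul_inv]

lemma IsUniformOnSphere.ae_norm_le_one {n : ℕ} {μ : Measure (EuclideanSpace ℝ (Fin n))}
    (hμ : IsUniformOnSphere μ) : ∀ᵐ x ∂μ, ‖x‖ ≤ 1 := by
  have := hμ.1
  have hsphere : ∀ᵐ x ∂μ, x ∈ Metric.sphere 0 1 :=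
    (prob_compl_eq_zero_iff Metric.isClosed_sphere.measurableSet).2 hμ.2.1
  filter_upwards [hsphere] with x hx using (mem_sphere_zero_iff_norm.1 hx).le

theorem stmt0_general {ι : Type*} [Fintype ι] {μ : Measure (EuclideanSpace ℝ ι)}
    [IsProbabilityMeasure μ] (hμ : IsRotationInvariant μ) (hball : ∀ᵐ x ∂μ, ‖x‖ ≤ 1)
    {a : ℝ} (ha : 0 ≤ a) :
    1 - 2 * (Fintype.card ι : ℝ) ^ (1 - a) ≤
      μ.real {x | ∀ i, |x i| ≤ √(2 * a * Real.log (Fintype.card ι) / Fintype.card ι)} := by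
  set n := Fintype.card ι
  set t := √(2 * a * Real.log n / n)
  have hcoord (i : ι) : HasSubgaussianMGF (fun x : EuclideanSpace ℝ ι ↦ x i) (n : ℝ≥0)⁻¹ μ := by
    simpa using hμ.hasSubgaussianMGF_inner hball ((EuclideanSpace.basisFun ι ℝ).norm_eq_one i)
  have hexponent : -t ^ 2 / (2 * ((n : ℝ≥0)⁻¹ : ℝ≥0)) = -(a * Real.log n) := by
    rw [Real.sq_sqrt (by positivity), NNReal.coe_inv, NNReal.coe_natCast]
    rcases n.eq_zero_or_pos with hzero | hpos
    · simp [hzero]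
    · field_simp
  have hunion := one_sub_le_measureReal_forall_abs_le_of_hasSubgaussianMGF hcoord
    (ε := t) (Real.sqrt_nonneg _)
  rw [hexponent] at hunion
  linarith [natCast_mul_exp_neg_mul_log_le_rpow n a]

/-- largest coordinate of a random unit vector.  If `v` is uniformly
distributed on the unit sphere `S^{n-1}`, then for every `C > 1`, with probability at least
`1 - 2 n^{1-C} - exp(-((C-1)²/(4C²)) n)` one has `‖v‖_∞ ≤ √(2 C³ log n / n)`. -/
theorem stmt0 {n : ℕ} (μ : Measure (EuclideanSpace ℝ (Fin n)))
    (hμ : IsUniformOnSphere μ) (C : ℝ) (hC : 1 < C) :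
    ENNReal.ofReal
        (1 - 2 * (n : ℝ) ^ ((1 : ℝ) - C)
          - Real.exp (-((C - 1) ^ 2 / (4 * C ^ 2)) * n)) ≤
      μ {x | ∀ i : Fin n, |x i| ≤ Real.sqrt (2 * C ^ 3 * Real.log n / n)} := by
  have := hμ.1
  have hC3 : C ≤ C ^ 3 := le_self_pow₀ hC.le (by norm_num)
  have hrpow : (n : ℝ) ^ (1 - C ^ 3) ≤ (n : ℝ) ^ (1 - C) :=
    natCast_rpow_le_natCast_rpow n (by linarith) (by linarith)
  have hgeneral := stmt0_general hμ.2.2 hμ.ae_norm_le_one (a := C ^ 3) (by positivity)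
  rw [Fintype.card_fin] at hgeneral
  refine ENNReal.ofReal_le_of_le_toReal (le_trans ?_ hgeneral)
  linarith [Real.exp_pos (-((C - 1) ^ 2 / (4 * C ^ 2)) * n)]
end

section
/- Fix delta in (0,1). For each n >= 2, let S_n be a subset of {1, ..., n} with |S_n| = floor(delta * n), and let v_n be a random vector uniformly distributed on the unit sphere S^{n-1} of R^n. Then the random variables sqrt(n^3 / (2 |S_n| (n - |S_n|))) * (||v_n||_{S_n}^2 - |S_n| / n) converge in distribution to the standard normal distribution N(0,1) as n tends to infinity. -/
/-!
A rotation-invariant law on the unit sphere is determined by its characteristic function, which is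
radial: averaging `charFun μ (r • u)` over `u` with respect to a second such law `ν` and exchanging
the integrals gives `charFun μ = charFun ν`. Hence the uniform law is that of `G / ‖G‖`, where `G`
has independent standard Gaussian coordinates `X i`. For this representation the centred statistic
is a contrast, that is a weighted sum of the `X i ^ 2` whose weights add up to zero, divided by
`‖G‖ ^ 2 / n`. As the weights add up to zero, each `X i ^ 2` may be replaced by
`(X i ^ 2 - 1) / √2`; after normalization the weights have square sum `1` and are uniformly small,
so the central limit theorem applies to the weighted sum. By the law of large numbers
`‖G‖ ^ 2 / n → 1`, and Slutsky's theorem concludes.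
-/

open MeasureTheory ProbabilityTheory Filter

open scoped Finset InnerProductSpace NNReal Topology

section RotationInvariant

variable {E : Type*} [NormedAddCommGroup E] [InnerProductSpace ℝ E] [MeasurableSpace E]
  [BorelSpace E]

lemma charFun_eq_of_norm_eq {μ : Measure E} (hμ : ∀ O : E ≃ₗᵢ[ℝ] E, μ.map O = μ) {s t : E}
    (h : ‖s‖ = ‖t‖) : charFun μ s = charFun μ t := by
  let O : E ≃ₗᵢ[ℝ] E := (ℝ ∙ (s - t))ᗮ.reflection
  have hO : O s = t := Submodule.reflection_sub h
  calc charFun μ s = ∫ x, Complex.exp (⟪O x, t⟫_ℝ * Complex.I) ∂μ := by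
        simp only [charFun_apply, ← hO, LinearIsometryEquiv.inner_map_map]
    _ = charFun (μ.map O) t := by
        rw [charFun_apply, integral_map (by fun_prop) (by fun_prop)]
    _ = charFun μ t := by rw [hμ O]

lemma integral_charFun_norm_smul {μ ν : Measure E} [IsProbabilityMeasure ν]
    (hμ : ∀ O : E ≃ₗᵢ[ℝ] E, μ.map O = μ) (hν : ∀ᵐ u ∂ν, ‖u‖ = 1) (t : E) :
    ∫ u, charFun μ (‖t‖ • u) ∂ν = charFun μ t := by
  have hconst : ∀ᵐ u ∂ν, charFun μ (‖t‖ • u) = charFun μ t := by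
    filter_upwards [hν] with u hu
    exact charFun_eq_of_norm_eq hμ (by simp [norm_smul, hu])
  simp [integral_congr_ae hconst]

variable [SecondCountableTopology E]

lemma integral_charFun_smul_comm (μ ν : Measure E) [IsFiniteMeasure μ] [IsFiniteMeasure ν]
    (r : ℝ) : ∫ u, charFun μ (r • u) ∂ν = ∫ x, charFun ν (r • x) ∂μ := by
  have hint : Integrable
      (Function.uncurry fun u x : E ↦ Complex.exp (⟪x, r • u⟫_ℝ * Complex.I)) (ν.prod μ) :=
    .of_bound (C := 1) (by unfold Function.uncurry; fun_prop)
      (.of_forall fun p ↦ (Complex.norm_exp_ofReal_mul_I _).le)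
  simp only [charFun_apply]
  rw [integral_integral_swap hint]
  simp only [inner_smul_right, real_inner_comm]

theorem eq_of_map_linearIsometryEquiv_eq_of_ae_norm_eq_one [CompleteSpace E] {μ ν : Measure E}
    [IsProbabilityMeasure μ] [IsProbabilityMeasure ν]
    (hμ : ∀ O : E ≃ₗᵢ[ℝ] E, μ.map O = μ) (hμ1 : ∀ᵐ x ∂μ, ‖x‖ = 1)
    (hν : ∀ O : E ≃ₗᵢ[ℝ] E, ν.map O = ν) (hν1 : ∀ᵐ x ∂ν, ‖x‖ = 1) : μ = ν := by
  refine Measure.ext_of_charFun (funext fun t ↦ ?_)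
  calc charFun μ t = ∫ u, charFun μ (‖t‖ • u) ∂ν := (integral_charFun_norm_smul hμ hν1 t).symm
    _ = ∫ x, charFun ν (‖t‖ • x) ∂μ := integral_charFun_smul_comm μ ν ‖t‖
    _ = charFun ν t := integral_charFun_norm_smul hν hμ1 t

end RotationInvariant

section NormalizedGaussian

lemma measurable_normalize {V : Type*} [NormedAddCommGroup V] [NormedSpace ℝ V]
    [MeasurableSpace V] [BorelSpace V] [SecondCountableTopology V] :
    Measurable (NormedSpace.normalize : V → V) :=
  measurable_norm.inv.smul measurable_id

variable {E : Type*} [NormedAddCommGroup E] [InnerProductSpace ℝ E] [MeasurableSpace E]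
  [BorelSpace E] [FiniteDimensional ℝ E]

lemma nullSingletonClass_stdGaussian [Nontrivial E] : NullSingletonClass (stdGaussian E) := by
  refine IsGaussian.nullSingletonClass fun x hx ↦ ?_
  obtain ⟨t, ht⟩ := exists_ne (0 : E)
  have hvar : ‖innerSL ℝ t‖ ^ 2 = 0 := by
    rw [← variance_dual_stdGaussian, hx, variance_dirac]
  simp_all

lemma ae_norm_eq_one_map_normalize_stdGaussian [Nontrivial E] :
    ∀ᵐ u ∂(stdGaussian E).map NormedSpace.normalize, ‖u‖ = 1 := by
  have := nullSingletonClass_stdGaussian (E := E)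
  rw [ae_map_iff measurable_normalize.aemeasurable
    (measurableSet_eq_fun (by fun_prop) (by fun_prop))]
  filter_upwards [Measure.ae_ne (stdGaussian E) 0] with x hx using NormedSpace.norm_normalize hx

lemma map_map_normalize_stdGaussian (O : E ≃ₗᵢ[ℝ] E) :
    ((stdGaussian E).map NormedSpace.normalize).map O =
      (stdGaussian E).map NormedSpace.normalize := by
  have hcomm : O ∘ NormedSpace.normalize = NormedSpace.normalize ∘ O := by
    ext x
    simp [NormedSpace.normalize]
  have hO : Measurable O := by fun_prop
  rw [Measure.map_map hO measurable_normalize, hcomm,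
    ← Measure.map_map measurable_normalize hO, stdGaussian_map]

end NormalizedGaussian

lemma IsUniformOnSphere.ae_norm_eq_one {n : ℕ} {μ : Measure (EuclideanSpace ℝ (Fin n))}
    (hμ : IsUniformOnSphere μ) : ∀ᵐ x ∂μ, ‖x‖ = 1 := by
  have := hμ.1
  have h := (mem_ae_iff_prob_eq_one Metric.isClosed_sphere.measurableSet).2 hμ.2.1
  filter_upwards [h] with x hx using mem_sphere_zero_iff_norm.1 hx

lemma IsUniformOnSphere.dim_ne_zero {n : ℕ} {μ : Measure (EuclideanSpace ℝ (Fin n))}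
    (hμ : IsUniformOnSphere μ) : n ≠ 0 := by
  rintro rfl
  have := hμ.1
  obtain ⟨x, hx⟩ := hμ.ae_norm_eq_one.exists
  simp [Subsingleton.elim x 0] at hx

lemma IsUniformOnSphere.hasLaw_normalize {n : ℕ} {μ : Measure (EuclideanSpace ℝ (Fin n))}
    (hμ : IsUniformOnSphere μ) :
    HasLaw NormedSpace.normalize μ (stdGaussian (EuclideanSpace ℝ (Fin n))) := by
  have := hμ.1
  have : NeZero n := ⟨hμ.dim_ne_zero⟩
  have := Measure.isProbabilityMeasure_map (μ := stdGaussian (EuclideanSpace ℝ (Fin n)))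
    measurable_normalize.aemeasurable
  exact ⟨measurable_normalize.aemeasurable, eq_of_map_linearIsometryEquiv_eq_of_ae_norm_eq_one
    map_map_normalize_stdGaussian ae_norm_eq_one_map_normalize_stdGaussian hμ.2.2
    hμ.ae_norm_eq_one⟩

section GaussianMoments

lemma integrable_pow_gaussianReal (m : ℝ) (v : ℝ≥0) (p : ℕ) :
    Integrable (fun x ↦ x ^ p) (gaussianReal m v) := by
  have h : MemLp id p (gaussianReal m v) := memLp_id_gaussianReal p
  exact h.integrable_norm_pow'.mono' (by fun_prop) (.of_forall fun x ↦ (norm_pow x p).le)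

open scoped Nat in
lemma integral_pow_two_mul_gaussianReal (v : ℝ≥0) (k : ℕ) :
    ∫ x, x ^ (2 * k) ∂gaussianReal 0 v = v ^ k * (2 * k - 1)‼ := by
  rcases eq_or_ne v 0 with rfl | hv
  · rcases eq_or_ne k 0 with rfl | hk <;> simp [*]
  have : (0 : ℝ) < v := by positivity
  have hGamma : ∫ x in Set.Ioi (0 : ℝ), x ^ (2 * k : ℝ) * Real.exp (-(1 / (2 * v)) * x ^ (2 : ℝ)) =
      (2 * v) ^ k * √(2 * v) / 2 * ((2 * k - 1)‼ * √Real.pi / 2 ^ k) := by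
    rw [integral_rpow_mul_exp_neg_mul_rpow two_pos (by linarith [k.cast_nonneg (α := ℝ)])
      (by positivity), show (2 * k + 1 : ℝ) / 2 = k + 1 / 2 by ring, Real.Gamma_nat_add_half,
      show -(2 * k + 1 : ℝ) / 2 = -(k + 1 / 2) by ring, one_div, Real.inv_rpow (by positivity),
      Real.rpow_neg (by positivity), inv_inv, Real.rpow_add (by positivity), Real.rpow_natCast,
      ← Real.sqrt_eq_rpow]
    ring
  have habs : ∀ x : ℝ, gaussianPDFReal 0 v x • x ^ (2 * k) = (√(2 * Real.pi * v))⁻¹ *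
      (|x| ^ (2 * k : ℝ) * Real.exp (-(1 / (2 * v)) * |x| ^ (2 : ℝ))) := by
    intro x
    have hpow : |x| ^ (2 * k : ℝ) = x ^ (2 * k) := by
      rw [← Nat.cast_ofNat, ← Nat.cast_mul, Real.rpow_natCast, (even_two_mul k).pow_abs]
    rw [hpow, Real.rpow_two, sq_abs, gaussianPDFReal, smul_eq_mul, sub_zero]
    ring_nf
  rw [integral_gaussianReal_eq_integral_smul hv]
  simp only [habs]
  rw [integral_const_mul, integral_comp_abs
    (f := fun y ↦ y ^ (2 * k : ℝ) * Real.exp (-(1 / (2 * v)) * y ^ (2 : ℝ))), hGamma,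
    show 2 * Real.pi * v = 2 * v * Real.pi by ring, Real.sqrt_mul (by positivity), mul_pow]
  field_simp

lemma integral_sq_gaussianReal (v : ℝ≥0) : ∫ x, x ^ 2 ∂gaussianReal 0 v = v := by
  simpa using integral_pow_two_mul_gaussianReal v 1

/-- The standardization `(x² - 1) / √2` of the square of a standard normal variable, which has
mean `1` and variance `2`. -/
noncomputable def standardizedSq (x : ℝ) : ℝ := (x ^ 2 - 1) / √2

lemma measurable_standardizedSq : Measurable standardizedSq := by
  unfold standardizedSq
  fun_prop

lemma integral_standardizedSq : ∫ x, standardizedSq x ∂gaussianReal 0 1 = 0 := by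
  simp only [standardizedSq, integral_div]
  rw [integral_sub (integrable_pow_gaussianReal 0 1 2) (integrable_const _),
    integral_sq_gaussianReal]
  simp

lemma integral_sq_standardizedSq : ∫ x, standardizedSq x ^ 2 ∂gaussianReal 0 1 = 1 := by
  have h₄ : ∫ x, x ^ 4 ∂gaussianReal 0 1 = 3 := by
    simpa [Nat.doubleFactorial] using integral_pow_two_mul_gaussianReal 1 2
  have hi := integrable_pow_gaussianReal 0 1
  calc ∫ x, standardizedSq x ^ 2 ∂gaussianReal 0 1
      = ∫ x, (x ^ 4 - 2 * x ^ 2 + 1) / 2 ∂gaussianReal 0 1 := by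
        congr 1 with x
        rw [standardizedSq, div_pow, Real.sq_sqrt zero_le_two]
        ring
    _ = ((∫ x, x ^ 4 ∂gaussianReal 0 1) - 2 * (∫ x, x ^ 2 ∂gaussianReal 0 1) + 1) / 2 := by
        have hi₂ := (hi 2).const_mul 2
        rw [integral_div, integral_add (by exact (hi 4).sub hi₂) (integrable_const _),
          integral_sub (hi 4) hi₂, integral_const_mul]
        simp
    _ = 1 := by rw [integral_sq_gaussianReal, h₄]; norm_num

end GaussianMoments

section WeightedCentralLimitTheorem

lemma norm_prod_sub_prod_le_sum {ι R : Type*} [NormedCommRing R] [NormOneClass R] (s : Finset ι)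
    {a b : ι → R} (ha : ∀ i ∈ s, ‖a i‖ ≤ 1) (hb : ∀ i ∈ s, ‖b i‖ ≤ 1) :
    ‖∏ i ∈ s, a i - ∏ i ∈ s, b i‖ ≤ ∑ i ∈ s, ‖a i - b i‖ := by
  classical
  induction s using Finset.induction_on with
  | empty => simp
  | insert j s hj ih =>
    rw [Finset.forall_mem_insert] at ha hb
    have hA : ‖∏ i ∈ s, a i‖ ≤ 1 :=
      (Finset.norm_prod_le s a).trans (Finset.prod_le_one (fun _ _ ↦ norm_nonneg _) ha.2)
    rw [Finset.prod_insert hj, Finset.prod_insert hj, Finset.sum_insert hj]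
    calc ‖a j * ∏ i ∈ s, a i - b j * ∏ i ∈ s, b i‖
        = ‖(a j - b j) * ∏ i ∈ s, a i + b j * (∏ i ∈ s, a i - ∏ i ∈ s, b i)‖ := by
          congr 1
          ring
      _ ≤ ‖a j - b j‖ * ‖∏ i ∈ s, a i‖ + ‖b j‖ * ‖∏ i ∈ s, a i - ∏ i ∈ s, b i‖ :=
          (norm_add_le _ _).trans (add_le_add (norm_mul_le _ _) (norm_mul_le _ _))
      _ ≤ ‖a j - b j‖ * 1 + 1 * ∑ i ∈ s, ‖a i - b i‖ := by
          gcongr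
          exacts [hb.1, ih ha.2 hb.2]
      _ = ‖a j - b j‖ + ∑ i ∈ s, ‖a i - b i‖ := by ring

lemma tendsto_prod_sub_prod_of_isLittleO {κ E R : Type*} {l : Filter κ} {ι : κ → Type*}
    [∀ n, Fintype (ι n)] [SeminormedAddCommGroup E] [NormedCommRing R] [NormOneClass R]
    {φ ψ : E → R} (hφ : ∀ x, ‖φ x‖ ≤ 1) (hψ : ∀ x, ‖ψ x‖ ≤ 1)
    (hφψ : (fun x ↦ φ x - ψ x) =o[𝓝 0] fun x ↦ ‖x‖ ^ 2) {u : ∀ n, ι n → E} {C : ℝ}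
    (hu : ∀ η > 0, ∀ᶠ n in l, ∀ i, ‖u n i‖ < η) (hsum : ∀ᶠ n in l, ∑ i, ‖u n i‖ ^ 2 ≤ C) :
    Tendsto (fun n ↦ ∏ i, φ (u n i) - ∏ i, ψ (u n i)) l (𝓝 0) := by
  rw [NormedAddGroup.tendsto_nhds_zero]
  intro ε hε
  have hδ : 0 < ε / (|C| + 1) := by positivity
  obtain ⟨η, hη, hη'⟩ := Metric.eventually_nhds_iff.1 (hφψ.def hδ)
  filter_upwards [hu η hη, hsum] with n hun hsn
  calc ‖∏ i, φ (u n i) - ∏ i, ψ (u n i)‖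
      ≤ ∑ i, ‖φ (u n i) - ψ (u n i)‖ :=
        norm_prod_sub_prod_le_sum _ (fun _ _ ↦ hφ _) (fun _ _ ↦ hψ _)
    _ ≤ ∑ i, ε / (|C| + 1) * ‖u n i‖ ^ 2 := by
        gcongr with i
        simpa using hη' (by simpa using hun i)
    _ = ε / (|C| + 1) * ∑ i, ‖u n i‖ ^ 2 := by rw [Finset.mul_sum]
    _ ≤ ε / (|C| + 1) * |C| := by gcongr; exact hsn.trans (le_abs_self C)
    _ < ε := by rw [div_mul_eq_mul_div, div_lt_iff₀ (by positivity)]; linarith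

lemma isLittleO_charFun_sub_charFun {μ ν : Measure ℝ} [IsProbabilityMeasure μ]
    [IsProbabilityMeasure ν] (hμ₁ : ∫ x, x ∂μ = 0) (hμ₂ : ∫ x, x ^ 2 ∂μ = 1)
    (hν₁ : ∫ x, x ∂ν = 0) (hν₂ : ∫ x, x ^ 2 ∂ν = 1) :
    (fun t ↦ charFun μ t - charFun ν t) =o[𝓝 0] fun t ↦ t ^ 2 := by
  have hμ := taylor_charFun_two (P := μ) aemeasurable_id hμ₁ hμ₂
  have hν := taylor_charFun_two (P := ν) aemeasurable_id hν₁ hν₂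
  simpa [Measure.map_id] using hμ.sub hν

lemma charFun_map_sum_mul {ι Ω : Type*} [Fintype ι] {mΩ : MeasurableSpace Ω} {P : Measure Ω}
    {Y : ι → Ω → ℝ} {ν : Measure ℝ} (hY : ∀ i, HasLaw (Y i) ν P) (hindep : iIndepFun Y P)
    (c : ι → ℝ) (t : ℝ) :
    charFun (P.map fun ω ↦ ∑ i, c i * Y i ω) t = ∏ i, charFun ν (c i * t) := by
  have hYm : ∀ i, AEMeasurable (Y i) P := fun i ↦ (hY i).aemeasurable
  have hcY : iIndepFun (fun i ω ↦ c i * Y i ω) P := hindep.comp (fun i x ↦ c i * x) (by fun_prop)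
  rw [hcY.charFun_map_fun_sum_eq_prod (by fun_prop), Finset.prod_apply]
  exact Finset.prod_congr rfl fun i _ ↦ by rw [charFun_map_mul_comp (hYm i), (hY i).map_eq]

lemma prod_charFun_gaussianReal_mul {ι : Type*} [Fintype ι] {c : ι → ℝ}
    (hc : ∑ i, c i ^ 2 = 1) (v : ℝ≥0) (t : ℝ) :
    ∏ i, charFun (gaussianReal 0 v) (c i * t) = charFun (gaussianReal 0 v) t := by
  have hc' : ∑ i, (c i : ℂ) ^ 2 = 1 := mod_cast hc
  simp only [charFun_gaussianReal, ← Complex.exp_sum]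
  congr 1
  push_cast
  calc ∑ i, (c i * t * 0 * Complex.I - v * (c i * t) ^ 2 / 2)
      = -(v * t ^ 2 / 2) * ∑ i, (c i : ℂ) ^ 2 := by
        rw [Finset.mul_sum]
        exact Finset.sum_congr rfl fun i _ ↦ by ring
    _ = t * 0 * Complex.I - v * t ^ 2 / 2 := by rw [hc']; ring

theorem tendstoInDistribution_sum_mul {ι : ℕ → Type*} [∀ n, Fintype (ι n)]
    {Ω : ℕ → Type*} {mΩ : ∀ n, MeasurableSpace (Ω n)}
    {P : ∀ n, Measure (Ω n)} [∀ n, IsProbabilityMeasure (P n)] {Ω' : Type*}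
    {mΩ' : MeasurableSpace Ω'} {P' : Measure Ω'} [IsProbabilityMeasure P'] {Z : Ω' → ℝ}
    (hZ : HasLaw Z (gaussianReal 0 1) P') {Y : ∀ n, ι n → Ω n → ℝ} {ν : Measure ℝ}
    [IsProbabilityMeasure ν] (hν₁ : ∫ x, x ∂ν = 0) (hν₂ : ∫ x, x ^ 2 ∂ν = 1)
    (hY : ∀ n i, HasLaw (Y n i) ν (P n)) (hindep : ∀ n, iIndepFun (Y n) (P n))
    {c : ∀ n, ι n → ℝ} (hc : ∀ ε > 0, ∀ᶠ n in atTop, ∀ i, |c n i| < ε)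
    (hsum : ∀ᶠ n in atTop, ∑ i, c n i ^ 2 = 1) :
    TendstoInDistribution (fun n ω ↦ ∑ i, c n i * Y n i ω) atTop Z P P' where
  forall_aemeasurable n := by
    have := fun i ↦ (hY n i).aemeasurable
    fun_prop
  aemeasurable_limit := hZ.aemeasurable
  tendsto := by
    refine ProbabilityMeasure.tendsto_iff_tendsto_charFun.2 fun t ↦ ?_
    simp only [ProbabilityMeasure.coe_mk, charFun_map_sum_mul (hY _) (hindep _), hZ.map_eq]
    have hsmall : ∀ η > 0, ∀ᶠ n in atTop, ∀ i, ‖c n i * t‖ < η := by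
      intro η hη
      filter_upwards [hc (η / (|t| + 1)) (by positivity)] with n hn i
      have hlt := (lt_div_iff₀ (by positivity)).1 (hn i)
      rw [Real.norm_eq_abs, abs_mul]
      nlinarith [abs_nonneg (c n i)]
    have hsum_sq : ∀ᶠ n in atTop, ∑ i, ‖c n i * t‖ ^ 2 ≤ t ^ 2 := by
      filter_upwards [hsum] with n hn
      simp only [Real.norm_eq_abs, sq_abs, mul_pow, ← Finset.sum_mul, hn, one_mul, le_refl]
    have hlittle : (fun u ↦ charFun ν u - charFun (gaussianReal 0 1) u) =o[𝓝 0]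
        fun u ↦ ‖u‖ ^ 2 := by
      simpa using isLittleO_charFun_sub_charFun hν₁ hν₂ integral_id_gaussianReal
        (by rw [integral_sq_gaussianReal, NNReal.coe_one])
    have hdiff := tendsto_prod_sub_prod_of_isLittleO (fun u ↦ norm_charFun_le_one u)
      (fun u ↦ norm_charFun_le_one u) hlittle hsmall hsum_sq
    refine tendsto_sub_nhds_zero_iff.1 (hdiff.congr' ?_)
    filter_upwards [hsum] with n hn
    rw [prod_charFun_gaussianReal_mul hn]

end WeightedCentralLimitTheorem

section Contrast

variable {ι : Type*} [Fintype ι]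

/-- The statistic `‖x‖_S²` of a point `x` of the unit sphere in `ℝⁿ`, centred at its mean `k / n`
under the uniform law, where `k = |S|`, and divided by `√(2 k (n - k) / n³)`, which is its standard
deviation up to a factor tending to `1`. -/
noncomputable def standardizedNormSqOn (S : Finset ι) (x : EuclideanSpace ℝ ι) : ℝ :=
  √((Fintype.card ι : ℝ) ^ 3 / (2 * #S * ((Fintype.card ι : ℝ) - #S))) *
    (∑ i ∈ S, x i ^ 2 - #S / Fintype.card ι)

lemma sum_sq_normalize (S : Finset ι) (x : EuclideanSpace ℝ ι) :
    ∑ i ∈ S, NormedSpace.normalize x i ^ 2 = (∑ i ∈ S, x i ^ 2) / ‖x‖ ^ 2 := by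
  simp [NormedSpace.normalize, mul_pow, ← Finset.mul_sum, div_eq_inv_mul]

/-- The weights of the contrast between a set `S` of `k` indices out of `n` and the average over
all indices: `(n - k) / √(k (n - k) n)` on `S` and `-k / √(k (n - k) n)` off `S`. They are all `0`
in the degenerate cases `k = 0` and `k = n`. -/
noncomputable def contrastWeight [DecidableEq ι] (S : Finset ι) (i : ι) : ℝ :=
  (Fintype.card ι * (if i ∈ S then 1 else 0) - #S) / √(#S * #Sᶜ * Fintype.card ι)

variable [DecidableEq ι]

lemma cast_card_add_cast_card_compl (S : Finset ι) : (#S + #Sᶜ : ℝ) = Fintype.card ι :=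
  mod_cast S.card_add_card_compl

lemma sum_contrastWeight_mul (S : Finset ι) (g : ι → ℝ) :
    ∑ i, contrastWeight S i * g i =
      (Fintype.card ι * ∑ i ∈ S, g i - #S * ∑ i, g i) / √(#S * #Sᶜ * Fintype.card ι) := by
  simp only [contrastWeight, div_mul_eq_mul_div, ← Finset.sum_div, sub_mul, mul_assoc,
    Finset.sum_sub_distrib, ← Finset.mul_sum, ite_mul, one_mul, zero_mul, Finset.sum_ite_mem,
    Finset.univ_inter]

lemma sum_contrastWeight (S : Finset ι) : ∑ i, contrastWeight S i = 0 := by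
  simpa [mul_comm] using sum_contrastWeight_mul S fun _ ↦ 1

lemma sum_sq_contrastWeight {S : Finset ι} (hS : S.Nonempty) (hSc : Sᶜ.Nonempty) :
    ∑ i, contrastWeight S i ^ 2 = 1 := by
  have : (0 : ℝ) < #S := mod_cast hS.card_pos
  have : (0 : ℝ) < #Sᶜ := mod_cast hSc.card_pos
  have hn := cast_card_add_cast_card_compl S
  have hmem : ∑ i ∈ S, contrastWeight S i = #S * #Sᶜ / √(#S * #Sᶜ * Fintype.card ι) := by
    rw [Finset.sum_congr rfl fun i hi ↦ by rw [contrastWeight, if_pos hi], Finset.sum_const,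
      nsmul_eq_mul, ← hn]
    ring
  simp only [pow_two]
  rw [sum_contrastWeight_mul, sum_contrastWeight, hmem, mul_zero, sub_zero, mul_div_assoc', div_div,
    Real.mul_self_sqrt (by positivity), mul_comm, div_self (by rw [← hn]; positivity)]

lemma sq_contrastWeight_le (S : Finset ι) (i : ι) :
    contrastWeight S i ^ 2 ≤ (#S : ℝ)⁻¹ + (#Sᶜ : ℝ)⁻¹ := by
  have hn := cast_card_add_cast_card_compl S
  rw [contrastWeight, div_pow, Real.sq_sqrt (by positivity), ← hn]
  rcases S.eq_empty_or_nonempty with rfl | hS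
  · simp
  rcases Sᶜ.eq_empty_or_nonempty with hSc | hSc
  · simp [hSc]
  have hk : (0 : ℝ) < #S := mod_cast hS.card_pos
  have hm : (0 : ℝ) < #Sᶜ := mod_cast hSc.card_pos
  rw [inv_add_inv hk.ne' hm.ne', div_le_div_iff₀ (by positivity) (by positivity)]
  split_ifs <;> nlinarith [mul_pos hk hm, mul_pos (mul_pos hk hm) hk, mul_pos (mul_pos hk hm) hm]

lemma eventually_abs_contrastWeight_lt {κ : Type*} {l : Filter κ} {ι : κ → Type*}
    [∀ n, Fintype (ι n)] [∀ n, DecidableEq (ι n)] {S : ∀ n, Finset (ι n)}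
    (hS : Tendsto (fun n ↦ #(S n)) l atTop) (hSc : Tendsto (fun n ↦ #(S n)ᶜ) l atTop)
    {ε : ℝ} (hε : 0 < ε) : ∀ᶠ n in l, ∀ i, |contrastWeight (S n) i| < ε := by
  have hbound : Tendsto (fun n ↦ (#(S n) : ℝ)⁻¹ + (#(S n)ᶜ : ℝ)⁻¹) l (𝓝 0) := by
    simpa using ((tendsto_inv_atTop_nhds_zero_nat (𝕜 := ℝ)).comp hS).add
      ((tendsto_inv_atTop_nhds_zero_nat (𝕜 := ℝ)).comp hSc)
  filter_upwards [hbound.eventually_lt_const (pow_pos hε 2)] with n hn i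
  exact abs_lt_of_sq_lt_sq ((sq_contrastWeight_le _ i).trans_lt hn) hε.le

lemma sum_contrastWeight_mul_standardizedSq (S : Finset ι) (x : EuclideanSpace ℝ ι) :
    ∑ i, contrastWeight S i * standardizedSq (x i) =
      (Fintype.card ι * ∑ i ∈ S, x i ^ 2 - #S * ‖x‖ ^ 2) /
        (√(#S * #Sᶜ * Fintype.card ι) * √2) := by
  simp only [standardizedSq, mul_div_assoc', mul_sub, mul_one, ← Finset.sum_div,
    Finset.sum_sub_distrib, sum_contrastWeight, sub_zero, EuclideanSpace.real_norm_sq_eq]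
  rw [sum_contrastWeight_mul S fun i ↦ x i ^ 2, div_div]

lemma standardizedNormSqOn_normalize (S : Finset ι) {x : EuclideanSpace ℝ ι} (hx : x ≠ 0) :
    standardizedNormSqOn S (NormedSpace.normalize x) =
      (∑ i, contrastWeight S i * standardizedSq (x i)) * (‖x‖ ^ 2 / Fintype.card ι)⁻¹ := by
  have hn : (Fintype.card ι : ℝ) ≠ 0 := by
    intro h
    have := Fintype.card_eq_zero_iff.1 (mod_cast h)
    exact hx (Subsingleton.elim _ _)
  have hsqrt : √((Fintype.card ι : ℝ) ^ 3 / (2 * #S * (Fintype.card ι - #S))) =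
      (Fintype.card ι : ℝ) ^ 2 / (√(#S * #Sᶜ * Fintype.card ι) * √2) := by
    rw [← cast_card_add_cast_card_compl S, add_sub_cancel_left, cast_card_add_cast_card_compl,
      ← Real.sqrt_mul (by positivity), ← Real.sqrt_sq (sq_nonneg (Fintype.card ι : ℝ)),
      ← Real.sqrt_div (by positivity)]
    congr 1
    field_simp
  have hx' : ‖x‖ ≠ 0 := norm_ne_zero_iff.2 hx
  rw [standardizedNormSqOn, hsqrt, sum_sq_normalize, sum_contrastWeight_mul_standardizedSq]
  field_simp

end Contrast

section GaussianSequence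

lemma hasLaw_toLp_stdGaussian {ι Ω : Type*} [Fintype ι] {mΩ : MeasurableSpace Ω} {P : Measure Ω}
    {X : ι → Ω → ℝ} (hX : ∀ i, HasLaw (X i) (gaussianReal 0 1) P) (hindep : iIndepFun X P) :
    HasLaw (fun ω ↦ WithLp.toLp 2 fun i ↦ X i ω) (stdGaussian (EuclideanSpace ℝ ι)) P :=
  HasLaw.fun_comp ⟨by fun_prop, map_pi_eq_stdGaussian⟩ (hindep.hasLaw_pi hX)

variable {Ω : Type*} {mΩ : MeasurableSpace Ω} {P : Measure Ω} {X : ℕ → Ω → ℝ}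

lemma ae_tendsto_sum_fin_div {ν : Measure ℝ} (hX : ∀ i, HasLaw (X i) ν P)
    (hindep : iIndepFun X P) {g : ℝ → ℝ} (hg : Measurable g) (hgi : Integrable g ν) :
    ∀ᵐ ω ∂P, Tendsto (fun n : ℕ ↦ (∑ i : Fin n, g (X i ω)) / n) atTop (𝓝 (∫ x, g x ∂ν)) := by
  have hint : Integrable (fun ω ↦ g (X 0 ω)) P :=
    Integrable.comp_aemeasurable (by rwa [(hX 0).map_eq]) (hX 0).aemeasurable
  have hlln := strong_law_ae_real (fun i ω ↦ g (X i ω)) hint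
    (fun i j hij ↦ (hindep.indepFun hij).comp hg hg) fun i ↦ ((hX i).identDistrib (hX 0)).comp hg
  filter_upwards [hlln] with ω hω
  have hmean : ∫ ω, g (X 0 ω) ∂P = ∫ x, g x ∂ν := (hX 0).integral_comp hg.aestronglyMeasurable
  simpa only [Fin.sum_univ_eq_sum_range fun i ↦ g (X i ω), hmean] using hω

lemma standardizedNormSqOn_normalize_toLp_ae_eq (hX : ∀ i, HasLaw (X i) (gaussianReal 0 1) P)
    (hindep : iIndepFun X P) {n : ℕ} (S : Finset (Fin n)) :
    (fun ω ↦ (∑ i : Fin n, contrastWeight S i * standardizedSq (X i ω)) *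
      (‖WithLp.toLp 2 fun i : Fin n ↦ X i ω‖ ^ 2 / n)⁻¹) =ᵐ[P]
      fun ω ↦ standardizedNormSqOn S
        (NormedSpace.normalize (WithLp.toLp 2 fun i : Fin n ↦ X i ω)) := by
  rcases n.eq_zero_or_pos with rfl | hn
  · simp [standardizedNormSqOn]
  have : NeZero n := ⟨hn.ne'⟩
  have hlaw := hasLaw_toLp_stdGaussian (fun i : Fin n ↦ hX i) (hindep.precomp Fin.val_injective)
  have := nullSingletonClass_stdGaussian (E := EuclideanSpace ℝ (Fin n))
  have hne : ∀ᵐ x ∂stdGaussian (EuclideanSpace ℝ (Fin n)), x ≠ 0 := Measure.ae_ne _ 0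
  rw [← hlaw.map_eq] at hne
  filter_upwards [ae_of_ae_map hlaw.aemeasurable hne] with ω hω
  simp [standardizedNormSqOn_normalize S hω]

variable [IsProbabilityMeasure P]

lemma tendstoInMeasure_inv_norm_sq_div (hX : ∀ i, HasLaw (X i) (gaussianReal 0 1) P)
    (hindep : iIndepFun X P) :
    TendstoInMeasure P
      (fun (n : ℕ) ω ↦ (‖WithLp.toLp 2 fun i : Fin n ↦ X i ω‖ ^ 2 / n)⁻¹) atTop
      fun _ ↦ (1 : ℝ) := by
  have hXm := fun i ↦ (hX i).aemeasurable
  have hlln := ae_tendsto_sum_fin_div hX hindep (g := fun x ↦ x ^ 2) (by fun_prop)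
    (integrable_pow_gaussianReal 0 1 2)
  simp only [EuclideanSpace.real_norm_sq_eq]
  refine tendstoInMeasure_of_tendsto_ae
    (fun n ↦ AEMeasurable.aestronglyMeasurable (by fun_prop)) ?_
  filter_upwards [hlln] with ω hω
  simpa [integral_sq_gaussianReal] using hω.inv₀ (by simp [integral_sq_gaussianReal])

lemma tendstoInDistribution_sum_contrastWeight_mul_standardizedSq
    (hX : ∀ i, HasLaw (X i) (gaussianReal 0 1) P) (hindep : iIndepFun X P)
    {S : ∀ n, Finset (Fin n)} (hS : Tendsto (fun n ↦ #(S n)) atTop atTop)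
    (hSc : Tendsto (fun n ↦ #(S n)ᶜ) atTop atTop) :
    TendstoInDistribution
      (fun n ω ↦ ∑ i : Fin n, contrastWeight (S n) i * standardizedSq (X i ω))
      atTop id (fun _ ↦ P) (gaussianReal 0 1) := by
  have hsq : AEMeasurable standardizedSq (gaussianReal 0 1) :=
    measurable_standardizedSq.aemeasurable
  have := Measure.isProbabilityMeasure_map hsq
  have hY : ∀ i, HasLaw (fun ω ↦ standardizedSq (X i ω))
      ((gaussianReal 0 1).map standardizedSq) P := fun i ↦ HasLaw.fun_comp ⟨hsq, rfl⟩ (hX i)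
  have hYindep : iIndepFun (fun i ω ↦ standardizedSq (X i ω)) P :=
    hindep.comp _ fun _ ↦ measurable_standardizedSq
  have hweights : ∀ᶠ n in atTop, ∑ i, contrastWeight (S n) i ^ 2 = 1 := by
    filter_upwards [hS.eventually_gt_atTop 0, hSc.eventually_gt_atTop 0] with n hn hnc
    exact sum_sq_contrastWeight (Finset.card_pos.1 hn) (Finset.card_pos.1 hnc)
  refine tendstoInDistribution_sum_mul HasLaw.id ?_ ?_ (fun n (i : Fin n) ↦ hY i)
    (fun n ↦ hYindep.precomp Fin.val_injective)
    (fun ε hε ↦ eventually_abs_contrastWeight_lt hS hSc hε) hweights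
  · rw [integral_map hsq (by fun_prop), integral_standardizedSq]
  · rw [integral_map hsq (by fun_prop), integral_sq_standardizedSq]

theorem tendstoInDistribution_standardizedNormSqOn_normalize
    (hX : ∀ i, HasLaw (X i) (gaussianReal 0 1) P) (hindep : iIndepFun X P)
    {S : ∀ n, Finset (Fin n)} (hS : Tendsto (fun n ↦ #(S n)) atTop atTop)
    (hSc : Tendsto (fun n ↦ #(S n)ᶜ) atTop atTop) :
    TendstoInDistribution
      (fun n ω ↦ standardizedNormSqOn (S n)
        (NormedSpace.normalize (WithLp.toLp 2 fun i : Fin n ↦ X i ω)))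
      atTop id (fun _ ↦ P) (gaussianReal 0 1) := by
  have hXm := fun i ↦ (hX i).aemeasurable
  have hslutsky := (tendstoInDistribution_sum_contrastWeight_mul_standardizedSq hX hindep hS
    hSc).continuous_comp_prodMk_of_tendstoInMeasure_const (g := fun p : ℝ × ℝ ↦ p.1 * p.2)
      (by fun_prop) (tendstoInMeasure_inv_norm_sq_div hX hindep) (fun n ↦ by fun_prop)
  exact hslutsky.congr (fun n ↦ standardizedNormSqOn_normalize_toLp_ae_eq hX hindep (S n))
    (.of_forall fun _ ↦ by simp)

end GaussianSequence

lemma tendsto_sub_natFloor_mul_atTop {δ : ℝ} (hδ0 : 0 ≤ δ) (hδ1 : δ < 1) :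
    Tendsto (fun n : ℕ ↦ n - ⌊δ * n⌋₊) atTop atTop := by
  have hlin : Tendsto (fun n : ℕ ↦ (1 - δ) * n) atTop atTop :=
    tendsto_natCast_atTop_atTop.const_mul_atTop (sub_pos.2 hδ1)
  refine tendsto_natCast_atTop_iff (R := ℝ) |>.1 (tendsto_atTop_mono (fun n ↦ ?_) hlin)
  have hfloor : (⌊δ * n⌋₊ : ℝ) ≤ δ * n := Nat.floor_le (by positivity)
  have hsub : (n : ℝ) ≤ (n - ⌊δ * n⌋₊ : ℕ) + ⌊δ * n⌋₊ := mod_cast le_tsub_add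
  linarith

theorem stmt4_general {μ : ∀ n : ℕ, Measure (EuclideanSpace ℝ (Fin n))}
    (hμ : ∀ᶠ n in atTop, IsUniformOnSphere (μ n)) {S : ∀ n : ℕ, Finset (Fin n)}
    (hS : Tendsto (fun n ↦ #(S n)) atTop atTop) (hSc : Tendsto (fun n ↦ #(S n)ᶜ) atTop atTop)
    (f : BoundedContinuousFunction ℝ ℝ) :
    Tendsto
      (fun n : ℕ ↦ ∫ x, f (√((n : ℝ) ^ 3 / (2 * #(S n) * ((n : ℝ) - #(S n)))) *
        (∑ i ∈ S n, x i ^ 2 - #(S n) / n)) ∂μ n)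
      atTop (𝓝 (∫ x, f x ∂gaussianReal 0 1)) := by
  obtain ⟨Ω, _, P, X, _, hX, hindep, _⟩ := exists_iid ℕ (gaussianReal 0 1)
  have hlim := tendstoInDistribution_standardizedNormSqOn_normalize hX hindep hS hSc
  have hint := ProbabilityMeasure.tendsto_iff_forall_integral_tendsto.1 hlim.tendsto f
  simp only [ProbabilityMeasure.coe_mk, Measure.map_id] at hint
  refine hint.congr' ?_
  filter_upwards [hμ] with n hn
  have hlaw := hn.hasLaw_normalize.fun_comp
    (hasLaw_toLp_stdGaussian (fun i : Fin n ↦ hX i) (hindep.precomp Fin.val_injective))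
  rw [integral_map (hlim.forall_aemeasurable n) (by fun_prop)]
  have hmeas : Measurable (standardizedNormSqOn (S n)) := by
    unfold standardizedNormSqOn
    fun_prop
  have hswap := hlaw.integral_comp (f := fun x ↦ f (standardizedNormSqOn (S n) x)) (by fun_prop)
  simpa [standardizedNormSqOn] using hswap

/-- central limit theorem for `‖v‖_S²`.  Fix `δ ∈ (0,1)`.  For each `n ≥ 2`
let `S_n ⊆ {1,…,n}` with `|S_n| = ⌊δ n⌋` and let `v_n` be uniform on `S^{n-1}`.  Then
`√(n³/(2|S_n|(n-|S_n|))) (‖v_n‖_{S_n}² - |S_n|/n)` converges in distribution to `N(0,1)`,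
i.e. the integrals of every bounded continuous function converge. -/
theorem stmt4 (δ : ℝ) (hδ0 : 0 < δ) (hδ1 : δ < 1)
    (μ : ∀ n : ℕ, Measure (EuclideanSpace ℝ (Fin n)))
    (hμ : ∀ n, 2 ≤ n → IsUniformOnSphere (μ n))
    (S : ∀ n : ℕ, Finset (Fin n))
    (hS : ∀ n, 2 ≤ n → (S n).card = ⌊δ * n⌋₊) :
    ∀ f : BoundedContinuousFunction ℝ ℝ,
      Tendsto
        (fun n : ℕ =>
          ∫ x, f (Real.sqrt ((n : ℝ) ^ 3 /
              (2 * (S n).card * ((n : ℝ) - (S n).card))) *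
            ((∑ i ∈ S n, x i ^ 2) - (S n).card / n)) ∂(μ n))
        atTop (nhds (∫ x, f x ∂(gaussianReal 0 1))) := by
  have hcard : ∀ᶠ n : ℕ in atTop, ⌊δ * n⌋₊ = #(S n) :=
    (eventually_ge_atTop 2).mono fun n hn ↦ (hS n hn).symm
  have hcard_compl : ∀ᶠ n : ℕ in atTop, n - ⌊δ * n⌋₊ = #(S n)ᶜ :=
    hcard.mono fun n hn ↦ by rw [Finset.card_compl, Fintype.card_fin, hn]
  exact stmt4_general ((eventually_ge_atTop 2).mono hμ)
    ((tendsto_nat_floor_mul_atTop δ hδ0).congr' hcard)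
    ((tendsto_sub_natFloor_mul_atTop hδ0.le hδ1).congr' hcard_compl)
end

section
/- Let A be an r x m real matrix, let B be a symmetric (Hermitian) r x r real matrix, and let epsilon, tau > 0. Let x in R^m and y in R^r be vectors with ||x|| <= epsilon * tau and B y = A x. Then y can be decomposed as y = v + q, where v and q are orthogonal, ||q|| <= epsilon, and v lies in the span of the eigenvectors of B corresponding to eigenvalues lambda with |lambda| <= tau * ||A||, i.e., v belongs to the sum of the eigenspaces of B for eigenvalues of absolute value at most tau * ||A||. -/
open Module

/-- The operator (spectral) norm of a rectangular real matrix, i.e. the norm of the induced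
linear map between Euclidean spaces. -/
noncomputable def matOpNorm {r m : ℕ} (A : Matrix (Fin r) (Fin m) ℝ) : ℝ :=
  ‖LinearMap.toContinuousLinearMap (Matrix.toEuclideanLin A)‖

/-!
Split `y = v + q` along the sum `W` of the eigenspaces for eigenvalues with `|λ| ≤ c = τ ‖A‖` and
its orthogonal complement. Both are `B`-invariant, so `‖B q‖ ≤ ‖B y‖ = ‖A x‖ ≤ c ε`. On `Wᗮ` only
eigenvalues with `|λ| > c` survive, so `c ‖q‖ < ‖B q‖` unless `q = 0`. The strictness of this
inequality is what covers `c = 0`, where `c` cannot be cancelled from `c ‖q‖ ≤ c ε`.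
-/

theorem norm_apply_le_norm_apply_add_of_mem_orthogonal {𝕜 E : Type*} [RCLike 𝕜]
    [NormedAddCommGroup E] [InnerProductSpace 𝕜 E] {T : End 𝕜 E} (hT : T.IsSymmetric)
    {W : Submodule 𝕜 E} (hW : W ∈ End.invtSubmodule T) {v q : E} (hv : v ∈ W) (hq : q ∈ Wᗮ) :
    ‖T q‖ ≤ ‖T (v + q)‖ := by
  have hTv : T v ∈ W := hW hv
  have hTq : T q ∈ Wᗮ := hT.orthogonalComplement_mem_invtSubmodule hW hq
  have pythagoras := norm_add_sq_eq_norm_sq_add_norm_sq_of_inner_eq_zero (T v) (T q)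
    (Submodule.inner_right_of_mem_orthogonal hTv hTq)
  rw [map_add, mul_self_le_mul_self_iff (norm_nonneg _) (norm_nonneg _), pythagoras]
  exact le_add_of_nonneg_left (mul_self_nonneg _)

/-- The spectral subspace of `T` for eigenvalues of norm at most `c`, encoded as a sum of
eigenspaces. A symmetric `T` stretches by a factor at most `c` on it, and by a factor greater than
`c` on its orthogonal complement. -/
def spectralSubspace {𝕜 V : Type*} [NormedField 𝕜] [AddCommGroup V] [Module 𝕜 V]
    (T : End 𝕜 V) (c : ℝ) : Submodule 𝕜 V :=
  ⨆ μ ∈ {μ : 𝕜 | ‖μ‖ ≤ c}, End.eigenspace T μ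

namespace spectralSubspace

section NormedField

variable {𝕜 V : Type*} [NormedField 𝕜] [AddCommGroup V] [Module 𝕜 V] {T : End 𝕜 V} {c : ℝ}

theorem eigenspace_le {μ : 𝕜} (hμ : ‖μ‖ ≤ c) : End.eigenspace T μ ≤ spectralSubspace T c :=
  le_iSup₂_of_le μ hμ le_rfl

theorem mem_invtSubmodule : spectralSubspace T c ∈ End.invtSubmodule T := by
  rw [End.mem_invtSubmodule]
  refine iSup₂_le fun μ hμ => ?_
  calc
    End.eigenspace T μ ≤ (End.eigenspace T μ).comap T := End.eigenspace_mem_invtSubmodule T μ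
    _ ≤ (spectralSubspace T c).comap T := Submodule.comap_mono (eigenspace_le hμ)

end NormedField

section InnerProductSpace

variable {𝕜 E : Type*} [RCLike 𝕜] [NormedAddCommGroup E] [InnerProductSpace 𝕜 E]
  [FiniteDimensional 𝕜 E] {T : End 𝕜 E} {c : ℝ}

theorem lt_abs_eigenvalues_of_repr_ne_zero (hT : T.IsSymmetric) {n : ℕ} (hn : finrank 𝕜 E = n)
    {q : E} (hq : q ∈ (spectralSubspace T c)ᗮ) {i : Fin n}
    (hi : (hT.eigenvectorBasis hn).repr q i ≠ 0) : c < |hT.eigenvalues hn i| := by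
  contrapose! hi
  have basis_mem : hT.eigenvectorBasis hn i ∈ spectralSubspace T c :=
    eigenspace_le (by rwa [RCLike.norm_ofReal])
      (End.mem_eigenspace_iff.mpr (hT.apply_eigenvectorBasis hn i))
  rw [OrthonormalBasis.repr_apply_apply, Submodule.inner_right_of_mem_orthogonal basis_mem hq]

theorem mul_norm_lt_norm_apply (hT : T.IsSymmetric) (hc : 0 ≤ c) {q : E}
    (hq : q ∈ (spectralSubspace T c)ᗮ) (hq₀ : q ≠ 0) : c * ‖q‖ < ‖T q‖ := by
  let b := hT.eigenvectorBasis rfl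
  have repr_apply (i) : ‖b.repr (T q) i‖ = |hT.eigenvalues rfl i| * ‖b.repr q i‖ := by
    simp only [b, hT.eigenvectorBasis_apply_self_apply, norm_mul, RCLike.norm_ofReal]
  have coord_lt (i) (hi : b.repr q i ≠ 0) : c * ‖b.repr q i‖ < ‖b.repr (T q) i‖ := by
    rw [repr_apply]
    exact mul_lt_mul_of_pos_right (lt_abs_eigenvalues_of_repr_ne_zero hT rfl hq hi)
      (norm_pos_iff.mpr hi)
  have coord_le (i) : c * ‖b.repr q i‖ ≤ ‖b.repr (T q) i‖ := by
    by_cases hi : b.repr q i = 0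
    · simp [hi]
    · exact (coord_lt i hi).le
  obtain ⟨j, hj⟩ : ∃ j, b.repr q j ≠ 0 := by
    by_contra! h
    exact hq₀ (b.repr.map_eq_zero_iff.mp (PiLp.ext h))
  refine lt_of_pow_lt_pow_left₀ 2 (norm_nonneg _) ?_
  calc
    (c * ‖q‖) ^ 2 = ∑ i, (c * ‖b.repr q i‖) ^ 2 := by
      rw [← b.repr.norm_map q, mul_pow, EuclideanSpace.norm_sq_eq, Finset.mul_sum]
      simp only [mul_pow]
    _ < ∑ i, ‖b.repr (T q) i‖ ^ 2 :=
      Finset.sum_lt_sum (fun i _ => by gcongr; exact coord_le i)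
        ⟨j, Finset.mem_univ j, by gcongr; exact coord_lt j hj⟩
    _ = ‖T q‖ ^ 2 := by rw [← EuclideanSpace.norm_sq_eq, b.repr.norm_map]

theorem norm_le_of_norm_apply_add_le (hT : T.IsSymmetric) (hc : 0 ≤ c) {ε : ℝ} (hε : 0 ≤ ε)
    {v q : E} (hv : v ∈ spectralSubspace T c) (hq : q ∈ (spectralSubspace T c)ᗮ)
    (h : ‖T (v + q)‖ ≤ c * ε) : ‖q‖ ≤ ε := by
  rcases eq_or_ne q 0 with rfl | hq₀
  · rwa [norm_zero]
  · have hlt : c * ‖q‖ < c * ε := calc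
      c * ‖q‖ < ‖T q‖ := mul_norm_lt_norm_apply hT hc hq hq₀
      _ ≤ ‖T (v + q)‖ :=
        norm_apply_le_norm_apply_add_of_mem_orthogonal hT mem_invtSubmodule hv hq
      _ ≤ c * ε := h
    exact (lt_of_mul_lt_mul_left hlt hc).le

end InnerProductSpace

end spectralSubspace

theorem stmt11_general {𝕜 E F : Type*} [RCLike 𝕜] [NormedAddCommGroup E] [InnerProductSpace 𝕜 E]
    [FiniteDimensional 𝕜 E] [SeminormedAddCommGroup F] [NormedSpace 𝕜 F] (A : F →L[𝕜] E)
    {T : End 𝕜 E} (hT : T.IsSymmetric) {ε τ : ℝ} (hε : 0 ≤ ε) (hτ : 0 ≤ τ) {x : F} {y : E}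
    (hx : ‖x‖ ≤ ε * τ) (hxy : T y = A x) :
    ∃ v q : E, y = v + q ∧ inner 𝕜 v q = 0 ∧ ‖q‖ ≤ ε ∧ v ∈ spectralSubspace T (τ * ‖A‖) := by
  obtain ⟨v, hv, q, hq, rfl⟩ := (spectralSubspace T (τ * ‖A‖)).exists_add_mem_mem_orthogonal y
  have hTy : ‖T (v + q)‖ ≤ τ * ‖A‖ * ε := calc
    ‖T (v + q)‖ = ‖A x‖ := by rw [hxy]
    _ ≤ ‖A‖ * (ε * τ) := A.le_opNorm_of_le hx
    _ = τ * ‖A‖ * ε := by ring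
  exact ⟨v, q, rfl, Submodule.inner_right_of_mem_orthogonal hv hq,
    spectralSubspace.norm_le_of_norm_apply_add_le hT (by positivity) hε hv hq hTy, hv⟩

/-- structure of solutions of `By = Ax`.  Let `A` be an `r × m` real
matrix, `B` a symmetric `r × r` real matrix, and `ε, τ > 0`.  If `‖x‖ ≤ ετ` and `By = Ax`,
then `y = v + q` with `v ⊥ q`, `‖q‖ ≤ ε`, and `v` in the sum of the eigenspaces of `B`
corresponding to eigenvalues `λ` with `|λ| ≤ τ ‖A‖`. -/
theorem stmt11 {r m : ℕ} (A : Matrix (Fin r) (Fin m) ℝ) (B : Matrix (Fin r) (Fin r) ℝ)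
    (hB : B.IsSymm) (ε τ : ℝ) (hε : 0 < ε) (hτ : 0 < τ)
    (x : EuclideanSpace ℝ (Fin m)) (y : EuclideanSpace ℝ (Fin r))
    (hx : ‖x‖ ≤ ε * τ)
    (hxy : Matrix.toEuclideanLin B y = Matrix.toEuclideanLin A x) :
    ∃ v q : EuclideanSpace ℝ (Fin r),
      y = v + q ∧ inner (𝕜 := ℝ) v q = 0 ∧ ‖q‖ ≤ ε ∧
      v ∈ ⨆ lam ∈ {lam : ℝ | |lam| ≤ τ * matOpNorm A},
            Module.End.eigenspace (Matrix.toEuclideanLin B) lam :=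
  stmt11_general (Matrix.toEuclideanLin A).toContinuousLinearMap
    (Matrix.isSymmetric_toEuclideanLin_iff.mpr hB) hε.le hτ.le hx hxy
end

section
/- Let A and J be r x m real matrices with ||A|| <= kappa, let B be a symmetric (Hermitian) r x r real matrix, and let epsilon, tau > 0 with 0 < epsilon < 1 (for epsilon >= 1 the statement holds trivially). Let x in R^m and y in R^r be vectors with ||x|| <= epsilon * tau, ||y|| <= 1, and B y = (A + J) x. Then: (i) there exists a non-negative real number eta such that B - eta I is invertible; and (ii) y can be decomposed as y = v + q where ||q|| <= epsilon and v lies in the subspace V spanned by the union of { eigenvectors of B with eigenvalue of absolute value at most tau * kappa } and the range of (B - eta I)^{-1} J; moreover dim(V) <= ( number of indices i with |lambda_i(B)| <= tau * kappa ) + rank(J). -/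
open Module

/-!
Put `w := y - (B - η)⁻¹ J x`, so that `(B - η) w = A x - η y`, and let `q` be the component of `w`
orthogonal to the eigenspaces of `B` for eigenvalues of modulus at most `σ := τκ`. Orthogonal
projection commutes with `B`, hence `‖(B - η) q‖ ≤ ‖A x - η y‖ ≤ ε σ + |η| ‖y‖`. The spectrum being
finite, the remaining eigenvalues have modulus at least some `c > σ`, so that
`‖(B - η) q‖ ≥ (c - |η|) ‖q‖`. The gap `c - σ` absorbs the error terms once `η` is small, and every
small `η ≠ 0` makes `B - η` invertible.
-/

open Filter Topology

theorem exists_gt_forall_mem_le_of_finite {α : Type*} [LinearOrder α] [TopologicalSpace α]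
    [OrderTopology α] [DenselyOrdered α] [NoMaxOrder α] {s : Set α} (hs : s.Finite) (a : α) :
    ∃ c > a, ∀ x ∈ s, a < x → c ≤ x := by
  have hle : ∀ᶠ c in 𝓝[>] a, ∀ x ∈ s, a < x → c ≤ x :=
    (eventually_all_finite hs).2 fun _ _ =>
      eventually_imp_distrib_left.2 fun hx => nhdsWithin_le_nhds (Iic_mem_nhds hx)
  obtain ⟨c, hc, hac⟩ := (hle.and self_mem_nhdsWithin).exists
  exact ⟨c, hac, hc⟩

theorem eventually_isUnit_sub_smul_one {K R : Type*} [Field K] [TopologicalSpace K] [T1Space K]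
    [Ring R] [Algebra K R] {a : R} (ha : (spectrum K a).Finite) (μ : K) :
    ∀ᶠ η in 𝓝[≠] μ, IsUnit (a - η • (1 : R)) := by
  filter_upwards [nhdsNE_le_cofinite μ ha.compl_mem_cofinite] with η hη
  rw [← IsUnit.neg_iff, neg_sub, ← Algebra.algebraMap_eq_smul_one]
  exact spectrum.notMem_iff.1 hη

section SpectralSubspace

variable {𝕜 E : Type*} [NormedField 𝕜] [AddCommGroup E] [Module 𝕜 E]

/-- The sum of the eigenspaces of `T` for the eigenvalues of norm at most `σ`; a symmetric `T` is
bounded below by some `c > σ` on its orthogonal complement. The supremum runs over all scalars of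
norm at most `σ`, those that are not eigenvalues contributing `⊥`. -/
def lowSpectralSubspace (T : End 𝕜 E) (σ : ℝ) : Submodule 𝕜 E :=
  ⨆ μ ∈ {μ : 𝕜 | ‖μ‖ ≤ σ}, T.eigenspace μ

theorem eigenspace_le_lowSpectralSubspace (T : End 𝕜 E) {σ : ℝ} {μ : 𝕜} (hμ : ‖μ‖ ≤ σ) :
    T.eigenspace μ ≤ lowSpectralSubspace T σ :=
  le_iSup₂_of_le μ hμ le_rfl

theorem lowSpectralSubspace_mem_invtSubmodule (T : End 𝕜 E) (σ : ℝ) :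
    lowSpectralSubspace T σ ∈ T.invtSubmodule := by
  refine T.mem_invtSubmodule.2 (iSup₂_le fun μ hμ x hx => ?_)
  rw [Submodule.mem_comap, End.mem_eigenspace_iff.1 hx]
  exact Submodule.smul_mem _ μ (eigenspace_le_lowSpectralSubspace T hμ hx)

end SpectralSubspace

section SymmetricOperator

variable {𝕜 E : Type*} [RCLike 𝕜] [NormedAddCommGroup E] [InnerProductSpace 𝕜 E] {T : End 𝕜 E}

theorem starProjection_orthogonal_apply_comm (hT : T.IsSymmetric) {L : Submodule 𝕜 E}
    [L.HasOrthogonalProjection] (hL : L ∈ T.invtSubmodule) (w : E) :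
    Lᗮ.starProjection (T w) = T (Lᗮ.starProjection w) := by
  have hmem : T (Lᗮ.starProjection w) ∈ Lᗮ :=
    hT.orthogonalComplement_mem_invtSubmodule hL (Lᗮ.starProjection_apply_mem w)
  have hsub : T w - T (Lᗮ.starProjection w) = T (L.starProjection w) := by
    rw [← map_sub, L.starProjection_orthogonal_val, sub_sub_cancel]
  refine Submodule.eq_starProjection_of_mem_orthogonal hmem ?_
  rw [hsub]
  exact L.le_orthogonal_orthogonal (hL (L.starProjection_apply_mem w))

variable [FiniteDimensional 𝕜 E]

theorem mul_norm_le_norm_apply_of_mem_orthogonal_lowSpectralSubspace (hT : T.IsSymmetric)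
    {σ c : ℝ} (hc : 0 ≤ c) (hgap : ∀ μ : 𝕜, T.HasEigenvalue μ → σ < ‖μ‖ → c ≤ ‖μ‖)
    {q : E} (hq : q ∈ (lowSpectralSubspace T σ)ᗮ) : c * ‖q‖ ≤ ‖T q‖ := by
  let e := hT.eigenvectorBasis rfl
  let μ : Fin (finrank 𝕜 E) → 𝕜 := fun i => hT.eigenvalues rfl i
  have hTe (i) : T (e i) = μ i • e i := hT.apply_eigenvectorBasis rfl i
  have hcoeff (i) : ‖inner 𝕜 (e i) (T q)‖ = ‖μ i‖ * ‖inner 𝕜 (e i) q‖ := by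
    rw [← hT, hTe, inner_smul_left, norm_mul, RCLike.norm_conj]
  have hle (i) : c * ‖inner 𝕜 (e i) q‖ ≤ ‖inner 𝕜 (e i) (T q)‖ := by
    rw [hcoeff]
    rcases le_or_gt ‖μ i‖ σ with hi | hi
    · have hei : e i ∈ lowSpectralSubspace T σ :=
        eigenspace_le_lowSpectralSubspace T hi (End.mem_eigenspace_iff.2 (hTe i))
      simp [Submodule.inner_right_of_mem_orthogonal hei hq]
    · gcongr
      exact hgap _ (hT.hasEigenvalue_eigenvalues rfl i) hi
  refine le_of_sq_le_sq ?_ (norm_nonneg _)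
  rw [mul_pow, ← e.sum_sq_norm_inner_right q, ← e.sum_sq_norm_inner_right (T q), Finset.mul_sum]
  gcongr with i
  rw [← mul_pow]
  gcongr
  exact hle i

theorem exists_gt_forall_mul_norm_le_norm_apply (hT : T.IsSymmetric) {σ : ℝ} (hσ : 0 ≤ σ) :
    ∃ c > σ, ∀ q ∈ (lowSpectralSubspace T σ)ᗮ, c * ‖q‖ ≤ ‖T q‖ := by
  obtain ⟨c, hσc, hgap⟩ :=
    exists_gt_forall_mem_le_of_finite (T.finite_hasEigenvalue.image (‖·‖)) σ
  refine ⟨c, hσc, fun q hq => ?_⟩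
  exact mul_norm_le_norm_apply_of_mem_orthogonal_lowSpectralSubspace hT (hσ.trans hσc.le)
    (fun μ hμ => hgap ‖μ‖ ⟨μ, hμ, rfl⟩) hq

theorem eventually_exists_sub_mem_lowSpectralSubspace (hT : T.IsSymmetric) {σ ε : ℝ} (hσ : 0 ≤ σ)
    (hε : 0 < ε) {a : E} (ha : ‖a‖ ≤ ε * σ) (y : E) :
    ∀ᶠ η in 𝓝 (0 : 𝕜), ∀ w : E, T w - η • w = a - η • y →
      ∃ q : E, w - q ∈ lowSpectralSubspace T σ ∧ ‖q‖ ≤ ε := by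
  obtain ⟨c, hσc, hc⟩ := exists_gt_forall_mul_norm_le_norm_apply hT hσ
  have hsmall : ∀ᶠ η in 𝓝 (0 : 𝕜), ‖η‖ * (‖y‖ + ε) < ε * (c - σ) := by
    have hcont : Continuous fun η : 𝕜 => ‖η‖ * (‖y‖ + ε) := by fun_prop
    refine hcont.continuousAt.eventually_lt_const ?_
    simpa using mul_pos hε (sub_pos.2 hσc)
  filter_upwards [hsmall] with η hη w hw
  set L := lowSpectralSubspace T σ
  set q := Lᗮ.starProjection w with hq
  have hηcσ : ‖η‖ < c - σ := by
    refine lt_of_mul_lt_mul_left ?_ hε.le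
    linarith [mul_nonneg (norm_nonneg η) (norm_nonneg y)]
  have hηc : ‖η‖ < c := hηcσ.trans_le (sub_le_self c hσ)
  have hTq : T q - η • q = Lᗮ.starProjection (a - η • y) := by
    rw [← hw, map_sub, map_smul,
      starProjection_orthogonal_apply_comm hT (lowSpectralSubspace_mem_invtSubmodule T σ)]
  have hupper : ‖T q - η • q‖ ≤ ε * σ + ‖η‖ * ‖y‖ := calc
    ‖T q - η • q‖ ≤ ‖a - η • y‖ := hTq ▸ Lᗮ.norm_starProjection_apply_le _
    _ ≤ ‖a‖ + ‖η • y‖ := norm_sub_le _ _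
    _ ≤ ε * σ + ‖η‖ * ‖y‖ := by rw [norm_smul]; gcongr
  have hlower : (c - ‖η‖) * ‖q‖ ≤ ‖T q - η • q‖ := calc
    (c - ‖η‖) * ‖q‖ ≤ ‖T q‖ - ‖η • q‖ := by
      rw [sub_mul, norm_smul]
      gcongr
      exact hc q (Lᗮ.starProjection_apply_mem w)
    _ ≤ ‖T q - η • q‖ := norm_sub_norm_le _ _
  refine ⟨q, ?_, le_of_mul_le_mul_left ?_ (sub_pos.2 hηc)⟩
  · simp [hq]
  · linarith

end SymmetricOperator

section Matrix

variable {𝕜 : Type*} [RCLike 𝕜] {l m n : Type*} [Fintype l] [Fintype n] [DecidableEq n]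

theorem finrank_range_toEuclideanLin [Finite m] (M : Matrix m n 𝕜) :
    finrank 𝕜 (LinearMap.range (Matrix.toEuclideanLin M)) = M.rank :=
  (M.rank_eq_finrank_range_toLin (PiLp.basisFun 2 𝕜 m) (PiLp.basisFun 2 𝕜 n)).symm

theorem finrank_sup_range_toEuclideanLin_mul_le [Finite m]
    (L : Submodule 𝕜 (EuclideanSpace 𝕜 m)) (M : Matrix m l 𝕜) (N : Matrix l n 𝕜) :
    finrank 𝕜 ↥(L ⊔ LinearMap.range (Matrix.toEuclideanLin (M * N))) ≤ finrank 𝕜 L + N.rank := by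
  refine (Submodule.finrank_add_le_finrank_add_finrank _ _).trans ?_
  rw [finrank_range_toEuclideanLin]
  gcongr
  exact Matrix.rank_mul_le_right M N

theorem toEuclideanLin_sub_smul_one_apply (B : Matrix n n 𝕜) (η : 𝕜) (z : EuclideanSpace 𝕜 n) :
    Matrix.toEuclideanLin (B - η • (1 : Matrix n n 𝕜)) z = Matrix.toEuclideanLin B z - η • z := by
  simp

variable [DecidableEq l]

theorem toEuclideanLin_apply_inv_mul {M : Matrix n n 𝕜} (hM : IsUnit M) (J : Matrix n l 𝕜)
    (x : EuclideanSpace 𝕜 l) :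
    Matrix.toEuclideanLin M (Matrix.toEuclideanLin (M⁻¹ * J) x) = Matrix.toEuclideanLin J x := by
  rw [← LinearMap.comp_apply, ← Matrix.toLpLin_mul, Matrix.mul_nonsing_inv_cancel_left]
  exact M.isUnit_iff_isUnit_det.1 hM

theorem stmt12_general (A J : Matrix n l 𝕜) {B : Matrix n n 𝕜} (hB : B.IsHermitian) {κ ε τ : ℝ}
    (hA : ‖LinearMap.toContinuousLinearMap (Matrix.toEuclideanLin A)‖ ≤ κ) (hε : 0 < ε)
    {x : EuclideanSpace 𝕜 l} {y : EuclideanSpace 𝕜 n} (hx : ‖x‖ ≤ ε * τ)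
    (hxy : Matrix.toEuclideanLin B y = Matrix.toEuclideanLin (A + J) x) :
    ∀ᶠ η in 𝓝[≠] (0 : 𝕜), IsUnit (B - η • (1 : Matrix n n 𝕜)) ∧
      ∃ v q : EuclideanSpace 𝕜 n, y = v + q ∧ ‖q‖ ≤ ε ∧
        v ∈ lowSpectralSubspace (Matrix.toEuclideanLin B) (τ * κ) ⊔
          LinearMap.range (Matrix.toEuclideanLin ((B - η • (1 : Matrix n n 𝕜))⁻¹ * J)) ∧
        finrank 𝕜 ↥(lowSpectralSubspace (Matrix.toEuclideanLin B) (τ * κ) ⊔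
            LinearMap.range (Matrix.toEuclideanLin ((B - η • (1 : Matrix n n 𝕜))⁻¹ * J))) ≤
          finrank 𝕜 (lowSpectralSubspace (Matrix.toEuclideanLin B) (τ * κ)) + J.rank := by
  have hσ : 0 ≤ τ * κ :=
    mul_nonneg (nonneg_of_mul_nonneg_right ((norm_nonneg x).trans hx) hε) ((norm_nonneg _).trans hA)
  have hAx : ‖Matrix.toEuclideanLin A x‖ ≤ ε * (τ * κ) :=
    (ContinuousLinearMap.le_of_opNorm_le_of_le _ hA hx).trans_eq (by ring)
  filter_upwards [eventually_isUnit_sub_smul_one B.finite_spectrum 0,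
    nhdsWithin_le_nhds (eventually_exists_sub_mem_lowSpectralSubspace
      (Matrix.isSymmetric_toEuclideanLin_iff.2 hB) hσ hε hAx y)] with η hη hdecomp
  set R := Matrix.toEuclideanLin ((B - η • (1 : Matrix n n 𝕜))⁻¹ * J)
  have hw : Matrix.toEuclideanLin B (y - R x) - η • (y - R x)
      = Matrix.toEuclideanLin A x - η • y := by
    rw [← toEuclideanLin_sub_smul_one_apply, map_sub, toEuclideanLin_apply_inv_mul hη,
      toEuclideanLin_sub_smul_one_apply, hxy, map_add, LinearMap.add_apply]
    abel
  obtain ⟨q, hq, hqε⟩ := hdecomp (y - R x) hw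
  refine ⟨hη, y - q, q, (sub_add_cancel y q).symm, hqε, ?_,
    finrank_sup_range_toEuclideanLin_mul_le _ _ J⟩
  rw [show y - q = (y - R x - q) + R x by abel]
  exact Submodule.add_mem_sup hq (LinearMap.mem_range_self R x)

end Matrix

/-- structure of solutions of `By = (A+J)x`.  Let `A, J` be `r × m` real
matrices with `‖A‖ ≤ κ`, `B` a symmetric `r × r` real matrix, `0 < ε < 1`, `τ > 0`,
`‖x‖ ≤ ετ`, `‖y‖ ≤ 1` and `By = (A+J)x`.  Then there is `η ≥ 0` with `B - ηI` invertible,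
and `y = v + q` with `‖q‖ ≤ ε` and `v` in the subspace `V` spanned by the eigenspaces of `B`
for eigenvalues of absolute value at most `τκ` together with the range of `(B - ηI)⁻¹ J`;
moreover `dim V ≤ dim(sum of those eigenspaces) + rank J`. -/
theorem stmt12 {r m : ℕ} (A J : Matrix (Fin r) (Fin m) ℝ) (B : Matrix (Fin r) (Fin r) ℝ)
    (hB : B.IsSymm) (κ ε τ : ℝ) (hA : matOpNorm A ≤ κ)
    (hε0 : 0 < ε) (hε1 : ε < 1) (hτ : 0 < τ)
    (x : EuclideanSpace ℝ (Fin m)) (y : EuclideanSpace ℝ (Fin r))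
    (hx : ‖x‖ ≤ ε * τ) (hy : ‖y‖ ≤ 1)
    (hxy : Matrix.toEuclideanLin B y = Matrix.toEuclideanLin (A + J) x) :
    ∃ η : ℝ, 0 ≤ η ∧
      IsUnit (B - η • (1 : Matrix (Fin r) (Fin r) ℝ)) ∧
      ∃ v q : EuclideanSpace ℝ (Fin r),
        y = v + q ∧ ‖q‖ ≤ ε ∧
        v ∈ (⨆ lam ∈ {lam : ℝ | |lam| ≤ τ * κ},
                Module.End.eigenspace (Matrix.toEuclideanLin B) lam) ⊔
              LinearMap.range
                (Matrix.toEuclideanLin ((B - η • (1 : Matrix (Fin r) (Fin r) ℝ))⁻¹ * J)) ∧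
        Module.finrank ℝ
            ↥((⨆ lam ∈ {lam : ℝ | |lam| ≤ τ * κ},
                Module.End.eigenspace (Matrix.toEuclideanLin B) lam) ⊔
              LinearMap.range
                (Matrix.toEuclideanLin ((B - η • (1 : Matrix (Fin r) (Fin r) ℝ))⁻¹ * J))) ≤
          Module.finrank ℝ
            ↥(⨆ lam ∈ {lam : ℝ | |lam| ≤ τ * κ},
                Module.End.eigenspace (Matrix.toEuclideanLin B) lam) + J.rank := by
  obtain ⟨η, h, hη⟩ := (((stmt12_general A J (Matrix.isHermitian_iff_isSymm.2 hB) hA hε0 hx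
    hxy).filter_mono (nhdsGT_le_nhdsNE 0)).and self_mem_nhdsWithin).exists
  exact ⟨η, le_of_lt hη, h⟩
end

section
/- Let v be a unit vector in R^n, let 1 <= m < n, and let eta > 0. If min over subsets S of {1, ..., n} with |S| = m of ||v||_S^2 >= eta, then for any 1 <= p <= 2, the l^p norm of v satisfies ||v||_{l^p}^p <= ceil( n / (n - m) ) * ((1 - eta) / eta^{1 - p/2}) * m^{1 - p/2}. -/
/-!
Let `S` carry the `m` smallest of the squares `a i = v i ^ 2`. The sum over `S` is at least `η`, so
every `a j` with `j ∉ S` is at least `η / m`, and there the power `a j ^ (p / 2)` is at most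
`(η / m) ^ (p / 2 - 1)` times `a j`. As the mean of `a i ^ (p / 2)` over all indices is at most its
mean over `Sᶜ`, passing from `Sᶜ` to the whole sum costs the factor `n / (n - m)`.
-/

section

open Finset

variable {ι : Type*} [Fintype ι]

theorem exists_card_eq_forall_notMem_le {α : Type*} [LinearOrder α] (f : ι → α) {m : ℕ}
    (hm : m ≤ Fintype.card ι) : ∃ S : Finset ι, #S = m ∧ ∀ i ∈ S, ∀ j ∉ S, f i ≤ f j := by
  classical
  induction m with
  | zero => exact ⟨∅, by simp⟩
  | succ k ih =>
    obtain ⟨S, hcard, hS⟩ := ih (by lia)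
    have hne : Sᶜ.Nonempty := by
      rw [← card_pos, card_compl]
      lia
    obtain ⟨j, hj, hmin⟩ := exists_min_image Sᶜ f hne
    refine ⟨insert j S, by rw [card_insert_of_notMem (mem_compl.1 hj), hcard], ?_⟩
    intro i hi l hl
    obtain ⟨-, hlS⟩ := not_or.1 (mt mem_insert.2 hl)
    obtain rfl | hiS := mem_insert.1 hi
    · exact hmin l (mem_compl.2 hlS)
    · exact hS i hiS l hlS

theorem card_compl_nsmul_sum_le_card_nsmul_sum_compl {M : Type*} [AddCommMonoid M] [PartialOrder M]
    [IsOrderedAddMonoid M] [DecidableEq ι] {f : ι → M} {S : Finset ι}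
    (hS : ∀ i ∈ S, ∀ j ∉ S, f i ≤ f j) :
    #Sᶜ • ∑ i, f i ≤ Fintype.card ι • ∑ j ∈ Sᶜ, f j := by
  have hpairs : #Sᶜ • ∑ i ∈ S, f i ≤ #S • ∑ j ∈ Sᶜ, f j := by
    simp only [← sum_nsmul, ← sum_const]
    rw [sum_comm]
    exact sum_le_sum fun j hj => sum_le_sum fun i hi => hS i hi j (mem_compl.1 hj)
  rw [← sum_add_sum_compl S, ← card_add_card_compl S, nsmul_add, add_nsmul]
  gcongr

theorem rpow_le_mul_rpow_sub_one {c x q : ℝ} (hc : 0 < c) (hx : c ≤ x) (hq : q ≤ 1) :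
    x ^ q ≤ x * c ^ (q - 1) := by
  have hx₀ : 0 < x := hc.trans_le hx
  calc
    x ^ q = x * x ^ (q - 1) := by rw [Real.rpow_sub_one hx₀.ne', mul_div_cancel₀ _ hx₀.ne']
    _ ≤ x * c ^ (q - 1) := by
      gcongr ?_ * ?_
      exact Real.rpow_le_rpow_of_nonpos hc hx (by linarith)

theorem le_sum_of_forall_card_eq {M : Type*} [AddCommMonoid M] [PartialOrder M]
    [IsOrderedAddMonoid M] {a : ι → M} (ha : ∀ i, 0 ≤ a i) {m : ℕ}
    (hm : m ≤ Fintype.card ι) {η : M} (hmin : ∀ S : Finset ι, #S = m → η ≤ ∑ i ∈ S, a i) :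
    η ≤ ∑ i, a i := by
  obtain ⟨S, -, hcard⟩ := exists_subset_card_eq (s := (univ : Finset ι)) hm
  exact (hmin S hcard).trans (sum_le_univ_sum_of_nonneg ha)

theorem sum_compl_rpow_le [DecidableEq ι] {a : ι → ℝ} {S : Finset ι}
    (hS : ∀ i ∈ S, ∀ j ∉ S, a i ≤ a j) {η : ℝ} (hη : 0 < η) (hηS : η ≤ ∑ i ∈ S, a i)
    {q : ℝ} (hq : q ≤ 1) :
    ∑ j ∈ Sᶜ, a j ^ q ≤ (∑ i, a i - η) * (η / #S) ^ (q - 1) := by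
  have hcard : (0 : ℝ) < #S := by
    exact_mod_cast (nonempty_of_sum_ne_zero (hη.trans_le hηS).ne').card_pos
  have hmean : ∀ j ∈ Sᶜ, η / #S ≤ a j := by
    intro j hj
    rw [div_le_iff₀' hcard, ← nsmul_eq_mul]
    exact hηS.trans (sum_le_card_nsmul S a (a j) fun i hi => hS i hi j (mem_compl.1 hj))
  calc
    ∑ j ∈ Sᶜ, a j ^ q ≤ ∑ j ∈ Sᶜ, a j * (η / #S) ^ (q - 1) :=
      sum_le_sum fun j hj => rpow_le_mul_rpow_sub_one (by positivity) (hmean j hj) hq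
    _ = (∑ i, a i - ∑ i ∈ S, a i) * (η / #S) ^ (q - 1) := by
      rw [← sum_mul, ← sum_add_sum_compl S a, add_sub_cancel_left]
    _ ≤ (∑ i, a i - η) * (η / #S) ^ (q - 1) := by gcongr

theorem sum_rpow_le_of_forall_card_eq {a : ι → ℝ} (ha : ∀ i, 0 ≤ a i) {m : ℕ}
    (hm : m < Fintype.card ι) {η : ℝ} (hη : 0 < η)
    (hmin : ∀ S : Finset ι, #S = m → η ≤ ∑ i ∈ S, a i) {q : ℝ} (hq₀ : 0 ≤ q) (hq₁ : q ≤ 1) :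
    ∑ i, a i ^ q ≤ (Fintype.card ι : ℝ) / ((Fintype.card ι : ℝ) - m) *
      ((∑ i, a i - η) * (η / m) ^ (q - 1)) := by
  classical
  obtain ⟨S, rfl, hS⟩ := exists_card_eq_forall_notMem_le a hm.le
  have hpow : ∀ i ∈ S, ∀ j ∉ S, a i ^ q ≤ a j ^ q :=
    fun i hi j hj => Real.rpow_le_rpow (ha i) (hS i hi j hj) hq₀
  have hcompl : (#Sᶜ : ℝ) = (Fintype.card ι : ℝ) - #S := by
    rw [card_compl, Nat.cast_sub hm.le]
  have hpos : (0 : ℝ) < (Fintype.card ι : ℝ) - #S := sub_pos.2 (by exact_mod_cast hm)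
  calc
    ∑ i, a i ^ q ≤
        (Fintype.card ι : ℝ) / ((Fintype.card ι : ℝ) - #S) * ∑ j ∈ Sᶜ, a j ^ q := by
      rw [div_mul_eq_mul_div, le_div_iff₀' hpos, ← hcompl, ← nsmul_eq_mul, ← nsmul_eq_mul]
      exact card_compl_nsmul_sum_le_card_nsmul_sum_compl hpow
    _ ≤ _ := by
      gcongr
      exact sum_compl_rpow_le hS hη (hmin S rfl) hq₁

theorem stmt13_general (v : ι → ℝ) {m : ℕ} (hm : m < Fintype.card ι) {η : ℝ} (hη : 0 < η)
    (hmin : ∀ S : Finset ι, #S = m → η ≤ ∑ i ∈ S, v i ^ 2)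
    {p : ℝ} (hp₀ : 0 ≤ p) (hp₂ : p ≤ 2) :
    ∑ i, |v i| ^ p ≤
      (⌈(Fintype.card ι : ℝ) / ((Fintype.card ι : ℝ) - m)⌉₊ : ℝ) *
        ((∑ i, v i ^ 2 - η) / η ^ (1 - p / 2)) * (m : ℝ) ^ (1 - p / 2) := by
  have hη_le : 0 ≤ ∑ i, v i ^ 2 - η :=
    sub_nonneg.2 (le_sum_of_forall_card_eq (fun i => sq_nonneg (v i)) hm.le hmin)
  have habs (i : ι) : |v i| ^ p = (v i ^ 2) ^ (p / 2) := by
    rw [← sq_abs, ← Real.rpow_natCast_mul (abs_nonneg _), Nat.cast_ofNat,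
      mul_div_cancel₀ p two_ne_zero]
  have hratio : (η / m) ^ (p / 2 - 1) = (m : ℝ) ^ (1 - p / 2) / η ^ (1 - p / 2) := by
    rw [← neg_sub, Real.rpow_neg_eq_inv_rpow, inv_div, Real.div_rpow m.cast_nonneg hη.le]
  calc
    ∑ i, |v i| ^ p = ∑ i, (v i ^ 2) ^ (p / 2) := sum_congr rfl fun i _ => habs i
    _ ≤ (Fintype.card ι : ℝ) / ((Fintype.card ι : ℝ) - m) *
        ((∑ i, v i ^ 2 - η) * (η / m) ^ (p / 2 - 1)) :=
      sum_rpow_le_of_forall_card_eq (fun i => sq_nonneg (v i)) hm hη hmin (by linarith)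
        (by linarith)
    _ ≤ (⌈(Fintype.card ι : ℝ) / ((Fintype.card ι : ℝ) - m)⌉₊ : ℝ) *
        ((∑ i, v i ^ 2 - η) * (η / m) ^ (p / 2 - 1)) := by
      gcongr
      exact Nat.le_ceil _
    _ = _ := by
      rw [hratio]
      ring

end

/-- a uniform lower bound implies an upper bound on the `ℓᵖ`-norm.
Let `v ∈ ℝⁿ` be a unit vector, `1 ≤ m < n` and `η > 0`.  If every subset `S` of size `m`
satisfies `‖v‖_S² ≥ η`, then for all `1 ≤ p ≤ 2`,
`‖v‖_{ℓᵖ}^p ≤ ⌈n/(n-m)⌉ ((1-η)/η^{1-p/2}) m^{1-p/2}`. -/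
theorem stmt13 {n : ℕ} (v : EuclideanSpace ℝ (Fin n)) (hv : ‖v‖ = 1)
    (m : ℕ) (hm1 : 1 ≤ m) (hmn : m < n) (η : ℝ) (hη : 0 < η)
    (hmin : ∀ S : Finset (Fin n), S.card = m → η ≤ ∑ i ∈ S, v i ^ 2)
    (p : ℝ) (hp1 : 1 ≤ p) (hp2 : p ≤ 2) :
    ∑ i : Fin n, |v i| ^ p ≤
      (⌈(n : ℝ) / ((n : ℝ) - m)⌉₊ : ℝ) * ((1 - η) / η ^ (1 - p / 2)) *
        (m : ℝ) ^ (1 - p / 2) := by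
  have hsum : ∑ i, v i ^ 2 = 1 := by rw [← EuclideanSpace.real_norm_sq_eq, hv, one_pow]
  simpa [hsum] using stmt13_general v (by simpa using hmn) hη hmin (by linarith) hp2
end

section
/- Let v be a unit vector in R^n, let 1 <= m <= n, and let eta > 0. If max over subsets S of {1, ..., n} with |S| = m of ||v||_S^2 <= eta, then for any 1 <= p <= 2, the l^p norm of v satisfies ||v||_{l^p}^p >= ((1 - eta) / eta^{1 - p/2}) * m^{1 - p/2}. -/
/-!
Fewer than `m` coordinates have `v i ^ 2 > η / m`, since `m` of them would carry mass more than `η`.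
Enlarge these to a set of exactly `m` coordinates; it has mass at most `η`, so at least `1 - η`
lies on the others. There `v i ^ 2 ≤ (η / m) ^ (1 - p / 2) * |v i| ^ p`, and summing gives the
bound.
-/

section

open Finset

section Selection

variable {ι M : Type*} [AddCommMonoid M] [LinearOrder M] [IsOrderedCancelAddMonoid M]
  {s : Finset ι} {f : ι → M} {m : ℕ} {a : M}

theorem card_filter_lt_of_forall_sum_le_nsmul (hm : 0 < m)
    (h : ∀ t ⊆ s, #t = m → ∑ i ∈ t, f i ≤ m • a) : #{i ∈ s | a < f i} < m := by
  by_contra! hcard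
  obtain ⟨t, ht, htm⟩ := exists_subset_card_eq hcard
  have ht_nonempty : t.Nonempty := card_pos.mp (htm ▸ hm)
  refine (h t (ht.trans (filter_subset _ _)) htm).not_gt ?_
  calc
    m • a = ∑ _i ∈ t, a := by rw [sum_const, htm]
    _ < ∑ i ∈ t, f i := sum_lt_sum_of_nonempty ht_nonempty fun i hi ↦ (mem_filter.mp (ht hi)).2

theorem exists_subset_card_eq_forall_notMem_le (hm : 0 < m) (hms : m ≤ #s)
    (h : ∀ t ⊆ s, #t = m → ∑ i ∈ t, f i ≤ m • a) :
    ∃ t ⊆ s, #t = m ∧ ∀ i ∈ s, i ∉ t → f i ≤ a := by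
  obtain ⟨t, hlarge, hts, htm⟩ := exists_subsuperset_card_eq (filter_subset (a < f ·) s)
    (card_filter_lt_of_forall_sum_le_nsmul hm h).le hms
  exact ⟨t, hts, htm, fun i his hit ↦
    le_of_not_gt fun hi ↦ hit (hlarge (mem_filter.mpr ⟨his, hi⟩))⟩

end Selection

theorem le_rpow_one_sub_mul_rpow {x c r : ℝ} (hx : 0 ≤ x) (hxc : x ≤ c) (hr : r ≤ 1) :
    x ≤ c ^ (1 - r) * x ^ r :=
  calc
    x = x ^ (1 - r) * x ^ r := by
      rw [← Real.rpow_add' hx (by simp), sub_add_cancel, Real.rpow_one]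
    _ ≤ c ^ (1 - r) * x ^ r := by gcongr

theorem abs_rpow_eq_sq_rpow_half (x p : ℝ) : |x| ^ p = (x ^ 2) ^ (p / 2) := by
  rw [← sq_abs, ← Real.rpow_natCast_mul (abs_nonneg x), Nat.cast_ofNat,
    mul_div_cancel₀ p two_ne_zero]

theorem sum_sub_le_div_rpow_mul_sum_rpow {ι : Type*} {s : Finset ι} {f : ι → ℝ} {m : ℕ} {η r : ℝ}
    (hf : ∀ i ∈ s, 0 ≤ f i) (hm : 0 < m) (hms : m ≤ #s)
    (hη : ∀ t ⊆ s, #t = m → ∑ i ∈ t, f i ≤ η) (hr : r ≤ 1) :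
    ∑ i ∈ s, f i - η ≤ (η / m) ^ (1 - r) * ∑ i ∈ s, f i ^ r := by
  classical
  have hη_nsmul : m • (η / m) = η := by rw [nsmul_eq_mul]; field_simp
  obtain ⟨t, hts, htm, hsmall⟩ :=
    exists_subset_card_eq_forall_notMem_le (a := η / m) hm hms (by rwa [hη_nsmul])
  have hη_nonneg : 0 ≤ η := (sum_nonneg fun i hi ↦ hf i (hts hi)).trans (hη t hts htm)
  calc
    ∑ i ∈ s, f i - η ≤ ∑ i ∈ s \ t, f i := by
      linarith [sum_sdiff (f := f) hts, hη t hts htm]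
    _ ≤ ∑ i ∈ s \ t, (η / m) ^ (1 - r) * f i ^ r := by
      refine sum_le_sum fun i hi ↦ ?_
      obtain ⟨his, hit⟩ := mem_sdiff.mp hi
      exact le_rpow_one_sub_mul_rpow (hf i his) (hsmall i his hit) hr
    _ = (η / m) ^ (1 - r) * ∑ i ∈ s \ t, f i ^ r := (mul_sum ..).symm
    _ ≤ (η / m) ^ (1 - r) * ∑ i ∈ s, f i ^ r := by
      gcongr ?_ * ?_
      exact sum_le_sum_of_subset_of_nonneg sdiff_subset
        fun i hi _ ↦ Real.rpow_nonneg (hf i hi) r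

theorem stmt14_general {ι : Type*} (s : Finset ι) (v : ι → ℝ) {m : ℕ} (hm : 0 < m) (hms : m ≤ #s)
    {η : ℝ} (hη : 0 < η) (hmax : ∀ t ⊆ s, #t = m → ∑ i ∈ t, v i ^ 2 ≤ η) {p : ℝ} (hp : p ≤ 2) :
    (∑ i ∈ s, v i ^ 2 - η) / η ^ (1 - p / 2) * (m : ℝ) ^ (1 - p / 2) ≤ ∑ i ∈ s, |v i| ^ p := by
  have hbound : ∑ i ∈ s, v i ^ 2 - η ≤ (η / m) ^ (1 - p / 2) * ∑ i ∈ s, |v i| ^ p := by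
    simp only [abs_rpow_eq_sq_rpow_half]
    exact sum_sub_le_div_rpow_mul_sum_rpow (fun i _ ↦ sq_nonneg (v i)) hm hms hmax (by linarith)
  have hm_pos : (0 : ℝ) < m := mod_cast hm
  calc
    (∑ i ∈ s, v i ^ 2 - η) / η ^ (1 - p / 2) * (m : ℝ) ^ (1 - p / 2)
      = (∑ i ∈ s, v i ^ 2 - η) / (η / m) ^ (1 - p / 2) := by
        rw [Real.div_rpow hη.le hm_pos.le, div_div_eq_mul_div, div_mul_eq_mul_div]
    _ ≤ ∑ i ∈ s, |v i| ^ p := (div_le_iff₀' (by positivity)).mpr hbound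

end

/-- a uniform upper bound implies a lower bound on the `ℓᵖ`-norm.
Let `v ∈ ℝⁿ` be a unit vector, `1 ≤ m ≤ n` and `η > 0`.  If every subset `S` of size `m`
satisfies `‖v‖_S² ≤ η`, then for all `1 ≤ p ≤ 2`,
`‖v‖_{ℓᵖ}^p ≥ ((1-η)/η^{1-p/2}) m^{1-p/2}`. -/
theorem stmt14 {n : ℕ} (v : EuclideanSpace ℝ (Fin n)) (hv : ‖v‖ = 1)
    (m : ℕ) (hm1 : 1 ≤ m) (hmn : m ≤ n) (η : ℝ) (hη : 0 < η)
    (hmax : ∀ S : Finset (Fin n), S.card = m → (∑ i ∈ S, v i ^ 2) ≤ η)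
    (p : ℝ) (hp1 : 1 ≤ p) (hp2 : p ≤ 2) :
    ((1 - η) / η ^ (1 - p / 2)) * (m : ℝ) ^ (1 - p / 2) ≤
      ∑ i : Fin n, |v i| ^ p := by
  have hsum : ∑ i, v i ^ 2 = 1 := by rw [← EuclideanSpace.real_norm_sq_eq, hv, one_pow]
  simpa only [hsum] using
    stmt14_general Finset.univ v hm1 (by simpa using hmn) hη (fun S _ ↦ hmax S) hp2
end
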